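/- arXiv:1901.04688 — 4 statements merged into one kernel-verified Lean document; each statement's English description precedes it below -/
import Mathlib

section
/- There exist sequences of integers (n_i)_{i≥0} with n_0 = 2 and (ℓ_i)_{i≥0} with ℓ_0 = 2, and binary words w_{i,j} ∈ {0,1}^{ℓ_i} for 0 ≤ j < n_i, with w_{0,0} = 01 and w_{0,1} = 11, such that, writing W_i = {w_{i,j} : 0 ≤ j < n_i} and, for k ≥ 1 and g ≥ 0, L_{i,k,g} = (W_i · {0^a : 0 ≤ a ≤ g})^{k−1} · W_i (concatenation languages, 0^a the word of a zeros, ε the empty word), the following hold: for every i ≥ 0, (a) H(w_{i,j}, w_{i,j+1}) = 1 for all 0 ≤ j ≤ n_i − 2, and (b) H(w_{i,0} · 0, 0 · w_{i,n_i−1}) = 1; for every i ≥ 1, (c) every word of W_{i−1} · W_{i−1} is a factor of every word of W_i, and (d) there exists k ≥ 1 with W_i ⊆ L_{i−1,k,1} · {ε, 0} and w_{i,0} ∈ L_{i−1,k,1}; and moreover for every i ≥ 0 and every m ≥ i + 1 there exists k ≥ 1 with W_m ⊆ L_{i,k,2} · {ε, 0} and w_{m,0} ∈ L_{i,k,2}.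 -/
/-!
Existence of the hierarchy of word families `W_i = {w_{i,0}, …, w_{i,n_i−1}} ⊆ {0,1}^{ℓ_i}`
used to build a language-connected minimal subshift: each level forms a Hamming path with
the wrap-around property, each level-`i` word contains every product of two level-`(i−1)`
words as a factor, each level decomposes over the previous level with gaps of at most one
zero (and trailing gap controlled), and Property A: every level-`m` word decomposes into
level-`i` words separated by gaps of at most two zeros, with trailing gap at most one zero
and no trailing gap for `w_{m,0}`.
-/

/-- Hamming distance between two binary words (of equal length) given as lists. -/
def hammingL (u v : List Bool) : ℕ :=
  (List.zipWith (fun a b => if a = b then 0 else 1) u v).sum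

/-- Concatenation of languages: `A · B = {u ++ v : u ∈ A, v ∈ B}`. -/
def lmul (A B : Set (List Bool)) : Set (List Bool) :=
  {w | ∃ u ∈ A, ∃ v ∈ B, w = u ++ v}

/-- Concatenation power of a language: `A^0 = {ε}`, `A^{k+1} = A · A^k`. -/
def lpow (A : Set (List Bool)) : ℕ → Set (List Bool)
  | 0 => {[]}
  | k + 1 => lmul A (lpow A k)

/-- `{0^a : 0 ≤ a ≤ g}`, the words of at most `g` zeros. -/
def zerosUpTo (g : ℕ) : Set (List Bool) :=
  {z | ∃ a ≤ g, z = List.replicate a false}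

/-- `L_{W,k,g} = (W · {ε, 0, …, 0^g})^{k−1} · W`. -/
def LL (W : Set (List Bool)) (k g : ℕ) : Set (List Bool) :=
  lmul (lpow (lmul W (zerosUpTo g)) (k - 1)) W

/-- `W_i = {w_{i,j} : 0 ≤ j < n_i}`. -/
def Wset (nseq : ℕ → ℕ) (w : ℕ → ℕ → List Bool) (i : ℕ) : Set (List Bool) :=
  {v | ∃ j < nseq i, v = w i j}

/-! ### Hamming distance -/

lemma hammingL_append (a b c d : List Bool) (h : a.length = b.length) :
    hammingL (a ++ c) (b ++ d) = hammingL a b + hammingL c d := by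
  unfold hammingL
  rw [List.zipWith_append h, List.sum_append]

lemma hammingL_self (a : List Bool) : hammingL a a = 0 := by
  induction a with
  | nil => rfl
  | cons x a ih =>
    have := hammingL_append [x] [x] a a rfl
    simp only [List.singleton_append] at this
    rw [this, ih]; simp [hammingL]

lemma hammingL_symm (a b : List Bool) : hammingL a b = hammingL b a := by
  unfold hammingL
  rw [List.zipWith_comm]
  congr 2
  funext x y
  simp [eq_comm]

lemma hammingL_ctx (p s u v : List Bool) (h : u.length = v.length) :
    hammingL (p ++ u ++ s) (p ++ v ++ s) = hammingL u v := by
  rw [hammingL_append _ _ _ _ (by simp [h]), hammingL_append _ _ _ _ rfl,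
    hammingL_self, hammingL_self]
  simp

/-! ### Languages -/

lemma lpow_append (A : Set (List Bool)) (a b : ℕ) (u v : List Bool)
    (hu : u ∈ lpow A a) (hv : v ∈ lpow A b) : u ++ v ∈ lpow A (a + b) := by
  induction a generalizing u with
  | zero =>
    have : u = [] := hu
    subst this; simpa using hv
  | succ a ih =>
    obtain ⟨x, hx, y, hy, rfl⟩ := hu
    have e : a + 1 + b = (a + b) + 1 := by omega
    rw [e]
    exact ⟨x, hx, y ++ v, ih y hy, by simp⟩

lemma LL_append (W : Set (List Bool)) (a b g c : ℕ) (u v : List Bool) (ha : 1 ≤ a) (hb : 1 ≤ b)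
    (hc : c ≤ g) (hu : u ∈ LL W a g) (hv : v ∈ LL W b g) :
    u ++ List.replicate c false ++ v ∈ LL W (a + b) g := by
  obtain ⟨x, hx, y, hy, rfl⟩ := hu
  obtain ⟨x', hx', y', hy', rfl⟩ := hv
  refine ⟨(x ++ (y ++ List.replicate c false ++ [])) ++ x', ?_, y', hy', by simp⟩
  have h1 : y ++ List.replicate c false ++ [] ∈ lpow (lmul W (zerosUpTo g)) 1 :=
    ⟨_, ⟨y, hy, _, ⟨c, hc, rfl⟩, rfl⟩, [], rfl, rfl⟩
  have := lpow_append _ _ _ _ _ (lpow_append _ _ _ _ _ hx h1) hx'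
  have e : a - 1 + 1 + (b - 1) = a + b - 1 := by omega
  rwa [e] at this

lemma LL_one (W : Set (List Bool)) (g : ℕ) (u : List Bool) (hu : u ∈ W) : u ∈ LL W 1 g :=
  ⟨[], rfl, u, hu, rfl⟩

/-- prefix with trailing zeros, then a gap, then anything ending in an `LL` word. -/
lemma LT_append (W : Set (List Bool)) (a b g t c : ℕ) (u v : List Bool) (ha : 1 ≤ a) (hb : 1 ≤ b)
    (hc : t + c ≤ g) (hu : u ∈ lmul (LL W a g) (zerosUpTo t)) (hv : v ∈ LL W b g) :
    u ++ List.replicate c false ++ v ∈ LL W (a + b) g := by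
  obtain ⟨x, hx, z, ⟨d, hd, rfl⟩, rfl⟩ := hu
  have := LL_append W a b g (d + c) x v ha hb (by omega) hx hv
  rw [List.replicate_add] at this
  simpa using this

lemma LT_append' (W : Set (List Bool)) (a b g t c : ℕ) (u v : List Bool) (ha : 1 ≤ a) (hb : 1 ≤ b)
    (hc : t + c ≤ g) (hu : u ∈ lmul (LL W a g) (zerosUpTo t))
    (hv : v ∈ lmul (LL W b g) (zerosUpTo t)) :
    u ++ List.replicate c false ++ v ∈ lmul (LL W (a + b) g) (zerosUpTo t) := by
  obtain ⟨x, hx, z, hz, rfl⟩ := hv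
  exact ⟨_, LT_append W a b g t c u x ha hb hc hu hx, z, hz, by simp⟩

lemma LT_flatten (W V : Set (List Bool)) (k g t : ℕ) (hk : 1 ≤ k) (ht : t ≤ g)
    (hV : ∀ v ∈ V, v ∈ lmul (LL W k g) (zerosUpTo t)) (Z : List (List Bool)) (hZ : Z ≠ [])
    (hZV : ∀ z ∈ Z, z ∈ V) :
    Z.flatten ∈ lmul (LL W (k * Z.length) g) (zerosUpTo t) := by
  induction Z with
  | nil => exact absurd rfl hZ
  | cons z Z ih =>
    by_cases h : Z = []
    · subst h; simpa using hV z (hZV z (by simp))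
    · have h1 := ih h (fun x hx => hZV x (by simp [hx]))
      have hl : 1 ≤ Z.length := List.length_pos_iff.mpr h
      have := LT_append' W k (k * Z.length) g t 0 z Z.flatten hk (Nat.mul_pos hk hl) (by omega)
        (hV z (hZV z (by simp))) h1
      have e : k + k * Z.length = k * (z :: Z).length := by simp; ring
      rw [e] at this
      simpa using this

lemma LT_flatten_last (W V : Set (List Bool)) (k g t : ℕ) (hk : 1 ≤ k) (ht : t ≤ g)
    (hV : ∀ v ∈ V, v ∈ lmul (LL W k g) (zerosUpTo t)) (Z : List (List Bool))
    (hZV : ∀ z ∈ Z, z ∈ V) (w0 : List Bool) (hw0 : w0 ∈ LL W k g) :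
    (Z ++ [w0]).flatten ∈ LL W (k * (Z ++ [w0]).length) g := by
  by_cases h : Z = []
  · subst h; simpa using hw0
  · have hl : 1 ≤ Z.length := List.length_pos_iff.mpr h
    have := LT_append W (k * Z.length) k g t 0 Z.flatten w0 (Nat.mul_pos hk hl) hk (by omega)
      (LT_flatten W V k g t hk ht hV Z h hZV) hw0
    have e : k * Z.length + k = k * (Z ++ [w0]).length := by simp; ring
    rw [e] at this
    simpa using this

/-! ### The shape of the next-level words -/

/-- Words built from `K` blocks of `L` with exactly one extra zero inserted after some nonempty
prefix of blocks (after the last block only if that block is `w0`), and having `Q` as a factor. -/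
def Sform (L : List (List Bool)) (w0 : List Bool) (K : ℕ) (Q u : List Bool) : Prop :=
  ∃ Z1 Z2 : List (List Bool), (∀ z ∈ Z1, z ∈ L) ∧ (∀ z ∈ Z2, z ∈ L) ∧
    Z1.length + Z2.length = K ∧ Z1 ≠ [] ∧ (Z2 = [] → ∃ Z', Z1 = Z' ++ [w0]) ∧
    u = Z1.flatten ++ [false] ++ Z2.flatten ∧ Q <:+: u

lemma Sform_decomp (L : List (List Bool)) (w0 Q : List Bool) (K : ℕ) (W : Set (List Bool))
    (k g t : ℕ) (hk : 1 ≤ k) (ht : t ≤ 1) (hg : t + 1 ≤ g)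
    (hV : ∀ v ∈ L, v ∈ lmul (LL W k g) (zerosUpTo t)) (hw0 : w0 ∈ LL W k g)
    (u : List Bool) (hu : Sform L w0 K Q u) :
    u ∈ lmul (LL W (k * K) g) {[], [false]} := by
  obtain ⟨Z1, Z2, h1, h2, hK, hne, hlast, rfl, -⟩ := hu
  by_cases h : Z2 = []
  · obtain ⟨Z', rfl⟩ := hlast h
    subst h
    have := LT_flatten_last W {v | v ∈ L} k g t hk (by omega) hV Z'
      (fun z hz => h1 z (by simp [hz])) w0 hw0
    simp only [List.length_nil, add_zero] at hK
    rw [hK] at this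
    exact ⟨_, this, [false], by simp, by simp⟩
  · have l1 : 1 ≤ Z1.length := List.length_pos_iff.mpr hne
    have l2 : 1 ≤ Z2.length := List.length_pos_iff.mpr h
    have := LT_append' W (k * Z1.length) (k * Z2.length) g t 1 _ _ (Nat.mul_pos hk l1)
      (Nat.mul_pos hk l2) hg
      (LT_flatten W {v | v ∈ L} k g t hk (by omega) hV Z1 hne h1)
      (LT_flatten W {v | v ∈ L} k g t hk (by omega) hV Z2 h h2)
    rw [← Nat.mul_add, hK] at this
    obtain ⟨x, hx, z, ⟨d, hd, rfl⟩, e⟩ := this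
    refine ⟨x, hx, _, ?_, e⟩
    have : d = 0 ∨ d = 1 := by omega
    rcases this with rfl | rfl <;> simp

lemma first_decomp (L : List (List Bool)) (w0 : List Bool) (W : Set (List Bool))
    (k g t : ℕ) (hk : 1 ≤ k) (hg : t + 1 ≤ g)
    (hV : ∀ v ∈ L, v ∈ lmul (LL W k g) (zerosUpTo t)) (hw0 : w0 ∈ LL W k g)
    (Y : List (List Bool)) (hY : ∀ y ∈ Y, y ∈ L) :
    w0 ++ [false] ++ (Y ++ [w0]).flatten ∈ LL W (k * (Y.length + 2)) g := by
  have := LL_append W k (k * (Y ++ [w0]).length) g 1 w0 _ hk (Nat.mul_pos hk (by simp))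
    (by omega) hw0 (LT_flatten_last W {v | v ∈ L} k g t hk (by omega) hV Y hY w0 hw0)
  have e : k + k * (Y ++ [w0]).length = k * (Y.length + 2) := by simp; ring
  rw [e] at this
  exact this

lemma flatten_length (ℓ : ℕ) (Z : List (List Bool)) (h : ∀ z ∈ Z, z.length = ℓ) :
    Z.flatten.length = Z.length * ℓ := by
  induction Z with
  | nil => simp
  | cons z Z ih =>
    have := ih (fun x hx => h x (by simp [hx]))
    simp only [List.flatten_cons, List.length_append, this, h z (by simp), List.length_cons]
    ring

lemma Sform_length (L : List (List Bool)) (w0 Q : List Bool) (K ℓ : ℕ)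
    (hL : ∀ v ∈ L, v.length = ℓ) (u : List Bool) (hu : Sform L w0 K Q u) :
    u.length = K * ℓ + 1 := by
  obtain ⟨Z1, Z2, h1, h2, hK, hne, hlast, rfl, -⟩ := hu
  rw [List.length_append, List.length_append, flatten_length ℓ Z1 (fun z hz => hL z (h1 z hz)),
    flatten_length ℓ Z2 (fun z hz => hL z (h2 z hz)), ← hK]
  simp only [List.length_singleton]
  ring

/-! ### Paths -/

/-- Adjacency inside a predicate. -/
def Adj (S : List Bool → Prop) (u v : List Bool) : Prop := S u ∧ S v ∧ hammingL u v = 1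

lemma conn (L : List (List Bool)) (hc : L.IsChain (fun u v => hammingL u v = 1))
    (x y : List Bool) (hx : x ∈ L) (hy : y ∈ L) :
    Relation.ReflTransGen (Adj (fun u => u ∈ L)) x y := by
  have hsym : Std.Symm (Adj (fun u => u ∈ L)) :=
    ⟨fun u v h => ⟨h.2.1, h.1, by rw [hammingL_symm]; exact h.2.2⟩⟩
  have key : ∀ j (hj : j < L.length),
      Relation.ReflTransGen (Adj (fun u => u ∈ L)) (L[0]'(by omega)) L[j] := by
    intro j
    induction j with
    | zero => intro _; exact .refl
    | succ j ih =>
      intro hj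
      exact (ih (by omega)).tail ⟨by simp, by simp, List.isChain_iff_getElem.mp hc j hj⟩
  obtain ⟨i, hi, rfl⟩ := List.getElem_of_mem hx
  obtain ⟨j, hj, rfl⟩ := List.getElem_of_mem hy
  exact (Std.Symm.symm _ _ (key i hi)).trans (key j hj)

lemma conn_lift (L : List (List Bool)) (hc : L.IsChain (fun u v => hammingL u v = 1)) (ℓ : ℕ)
    (hL : ∀ v ∈ L, v.length = ℓ) (S : List Bool → Prop) (p s : List Bool)
    (hS : ∀ x ∈ L, S (p ++ x ++ s)) (x y : List Bool) (hx : x ∈ L) (hy : y ∈ L) :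
    Relation.ReflTransGen (Adj S) (p ++ x ++ s) (p ++ y ++ s) := by
  refine Relation.ReflTransGen.lift (fun x => p ++ x ++ s) ?_ _ _ (conn L hc x y hx hy)
  rintro a b ⟨ha, hb, hab⟩
  exact ⟨hS a ha, hS b hb, by rw [hammingL_ctx _ _ _ _ (by rw [hL a ha, hL b hb])]; exact hab⟩

lemma move_half (L : List (List Bool)) (hc : L.IsChain (fun u v => hammingL u v = 1)) (ℓ : ℕ)
    (hL : ∀ v ∈ L, v.length = ℓ) (w0 wl Q : List Bool) (hw0 : w0 ∈ L) (hwl : wl ∈ L)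
    (hwrap : hammingL (w0 ++ [false]) ([false] ++ wl) = 1)
    (Z1 Z2 : List (List Bool)) (h1 : ∀ z ∈ Z1, z ∈ L) (h2 : ∀ z ∈ Z2, z ∈ L) (hne : Z1 ≠ [])
    (K : ℕ) (hK : Z1.length + Z2.length + 1 = K)
    (hQ : Q <:+: Z1.flatten ∨ Q <:+: Z2.flatten) (y : List Bool) (hy : y ∈ L) :
    Relation.ReflTransGen (Adj (Sform L w0 K Q)) (Z1.flatten ++ [false] ++ (y :: Z2).flatten)
      ((Z1 ++ [w0]).flatten ++ [false] ++ Z2.flatten) := by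
  have hQ' : ∀ x, Q <:+: Z1.flatten ++ x ++ Z2.flatten := by
    intro x
    rcases hQ with h | h
    · exact h.trans ⟨[], x ++ Z2.flatten, by simp⟩
    · exact h.trans (List.suffix_append _ _).isInfix
  have hS : ∀ x ∈ L, Sform L w0 K Q (Z1.flatten ++ [false] ++ x ++ Z2.flatten) := by
    intro x hx
    refine ⟨Z1, x :: Z2, h1, ?_, by simp; omega, hne, by simp, by simp, ?_⟩
    · intro z hz
      rcases List.mem_cons.mp hz with rfl | hz
      exacts [hx, h2 z hz]
    · have := hQ' ([false] ++ x)
      simpa using this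
  have e1 := conn_lift L hc ℓ hL _ (Z1.flatten ++ [false]) Z2.flatten hS y wl hy hwl
  have hS2 : Sform L w0 K Q ((Z1 ++ [w0]).flatten ++ [false] ++ Z2.flatten) := by
    refine ⟨Z1 ++ [w0], Z2, ?_, h2, by simp; omega, by simp, fun _ => ⟨Z1, rfl⟩, rfl, ?_⟩
    · intro z hz
      rcases List.mem_append.mp hz with hz | hz
      · exact h1 z hz
      · rw [List.mem_singleton.mp hz]; exact hw0
    · have := hQ' (w0 ++ [false])
      simpa using this
  have e2 : Adj (Sform L w0 K Q) (Z1.flatten ++ [false] ++ wl ++ Z2.flatten)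
      ((Z1 ++ [w0]).flatten ++ [false] ++ Z2.flatten) := by
    refine ⟨hS wl hwl, hS2, ?_⟩
    have := hammingL_ctx Z1.flatten Z2.flatten ([false] ++ wl) (w0 ++ [false])
      (by simp [hL w0 hw0, hL wl hwl, add_comm])
    rw [hammingL_symm (w0 ++ [false]), ← this] at hwrap
    simpa using hwrap
  have := e1.tail e2
  simpa using this

lemma move_full (L : List (List Bool)) (hc : L.IsChain (fun u v => hammingL u v = 1)) (ℓ : ℕ)
    (hL : ∀ v ∈ L, v.length = ℓ) (w0 wl Q : List Bool) (hw0 : w0 ∈ L) (hwl : wl ∈ L)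
    (hwrap : hammingL (w0 ++ [false]) ([false] ++ wl) = 1)
    (Z1 Z2 : List (List Bool)) (h1 : ∀ z ∈ Z1, z ∈ L) (h2 : ∀ z ∈ Z2, z ∈ L) (hne : Z1 ≠ [])
    (hne2 : Z2 ≠ [])
    (K : ℕ) (hK : Z1.length + Z2.length + 1 = K)
    (hQ : Q <:+: Z1.flatten ∨ Q <:+: Z2.flatten) (y : List Bool) (hy : y ∈ L) :
    Relation.ReflTransGen (Adj (Sform L w0 K Q)) (Z1.flatten ++ [false] ++ (y :: Z2).flatten)
      ((Z1 ++ [y]).flatten ++ [false] ++ Z2.flatten) := by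
  have e1 := move_half L hc ℓ hL w0 wl Q hw0 hwl hwrap Z1 Z2 h1 h2 hne K hK hQ y hy
  have hQ' : ∀ x, Q <:+: Z1.flatten ++ x ++ Z2.flatten := by
    intro x
    rcases hQ with h | h
    · exact h.trans ⟨[], x ++ Z2.flatten, by simp⟩
    · exact h.trans (List.suffix_append _ _).isInfix
  have hS : ∀ x ∈ L, Sform L w0 K Q (Z1.flatten ++ x ++ ([false] ++ Z2.flatten)) := by
    intro x hx
    refine ⟨Z1 ++ [x], Z2, ?_, h2, by simp; omega, by simp, fun h => absurd h hne2, by simp, ?_⟩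
    · intro z hz
      rcases List.mem_append.mp hz with hz | hz
      · exact h1 z hz
      · rw [List.mem_singleton.mp hz]; exact hx
    · have := hQ' (x ++ [false])
      simpa using this
  have e2 := conn_lift L hc ℓ hL _ Z1.flatten ([false] ++ Z2.flatten) hS w0 y hw0 hy
  refine e1.trans ?_
  simpa using e2

/-- Validity of a level. -/
def Good (L : List (List Bool)) : Prop :=
  L ≠ [] ∧ (∃ ℓ, ∀ v ∈ L, v.length = ℓ) ∧ L.IsChain (fun u v => hammingL u v = 1) ∧
    hammingL (L.getD 0 [] ++ [false]) ([false] ++ L.getD (L.length - 1) []) = 1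

/-- Relation between consecutive levels. -/
def Next (L L' : List (List Bool)) : Prop :=
  ∃ (Q : List Bool) (Y : List (List Bool)), (∀ a ∈ L, ∀ b ∈ L, a ++ b <:+: Q) ∧
    (∀ y ∈ Y, y ∈ L) ∧
    L'.getD 0 [] = L.getD 0 [] ++ [false] ++ (Y ++ [L.getD 0 []]).flatten ∧
    (∀ u ∈ L', Sform L (L.getD 0 []) (Y.length + 2) Q u)

lemma exists_pairs (L : List (List Bool)) : ∃ P : List (List Bool), (∀ p ∈ P, p ∈ L) ∧
    ∀ a ∈ L, ∀ b ∈ L, a ++ b <:+: P.flatten := by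
  refine ⟨(L.flatMap (fun a => L.map (fun b => [a, b]))).flatten, ?_, ?_⟩
  · intro p hp
    simp only [List.mem_flatten, List.mem_flatMap, List.mem_map] at hp
    obtain ⟨_, ⟨a, ha, b, hb, rfl⟩, hp⟩ := hp
    simp only [List.mem_cons, List.not_mem_nil, or_false] at hp
    rcases hp with rfl | rfl <;> assumption
  · intro a ha b hb
    rw [List.flatten_flatten]
    have hm : [a, b] ∈ L.flatMap (fun a => L.map (fun b => [a, b])) := by
      simp only [List.mem_flatMap, List.mem_map]
      exact ⟨a, ha, b, hb, rfl⟩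
    obtain ⟨s, t, e⟩ := List.append_of_mem hm
    rw [e]
    exact ⟨(s.map List.flatten).flatten, (t.map List.flatten).flatten, by simp⟩

lemma getD_mem (L : List (List Bool)) (j : ℕ) (h : j < L.length) : L.getD j [] ∈ L := by
  rw [List.getD_eq_getElem _ _ h]
  exact List.getElem_mem h

lemma exists_next (L : List (List Bool)) (hG : Good L) : ∃ L', Good L' ∧ Next L L' := by
  obtain ⟨hne, ⟨ℓ, hL⟩, hc, hwrap⟩ := hG
  have hpos : 0 < L.length := List.length_pos_iff.mpr hne
  have hw0 := getD_mem L 0 hpos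
  have hwl := getD_mem L (L.length - 1) (by omega)
  set w0 := L.getD 0 []
  set wl := L.getD (L.length - 1) []
  obtain ⟨P, hP, hPQ⟩ := exists_pairs L
  set Q := P.flatten with hQdef
  set K := (P ++ P).length + 2 with hK
  have hY : ∀ y ∈ P ++ P, y ∈ L := by
    intro y hy
    rcases List.mem_append.mp hy with h | h <;> exact hP y h
  have hS0 : ∀ x ∈ L, Sform L w0 K Q (x ++ ([false] ++ (P ++ P ++ [w0]).flatten)) := by
    intro x hx
    refine ⟨[x], P ++ P ++ [w0], by simpa using hx, ?_, ?_, by simp, by simp, by simp, ?_⟩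
    · intro z hz
      rcases List.mem_append.mp hz with hz | hz
      · exact hY z hz
      · rw [List.mem_singleton.mp hz]; exact hw0
    · simp [hK]; omega
    · exact ⟨x ++ [false], Q ++ w0, by simp [hQdef]⟩
  have main : ∀ Y2 Y1, P ++ P = Y1 ++ Y2 →
      Relation.ReflTransGen (Adj (Sform L w0 K Q))
        ((wl :: Y1).flatten ++ [false] ++ (Y2 ++ [w0]).flatten)
        ((wl :: (P ++ P ++ [w0])).flatten ++ [false]) := by
    intro Y2
    induction Y2 with
    | nil =>
      intro Y1 e
      simp only [List.append_nil] at e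
      subst e
      have := move_half L hc ℓ hL w0 wl Q hw0 hwl hwrap (wl :: (P ++ P)) []
        (by intro z hz
            rcases List.mem_cons.mp hz with rfl | hz
            exacts [hwl, hY z hz]) (by simp) (by simp) K (by simp [hK])
        (Or.inl ⟨wl, Q, by simp [hQdef]⟩) w0 hw0
      simpa using this
    | cons y Y2 ih =>
      intro Y1 e
      have hall : ∀ z ∈ Y1 ++ y :: Y2, z ∈ L := by rw [← e]; exact hY
      have hQ : Q <:+: (wl :: Y1).flatten ∨ Q <:+: (Y2 ++ [w0]).flatten := by
        rcases List.append_eq_append_iff.mp e with ⟨c, rfl, h⟩ | ⟨c, h, h'⟩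
        · left
          exact ⟨wl, c.flatten, by simp [hQdef]⟩
        · cases c with
          | nil =>
            left
            simp only [List.append_nil] at h
            subst h
            exact ⟨wl, [], by simp [hQdef]⟩
          | cons d c =>
            right
            simp only [List.cons_append, List.cons.injEq] at h'
            rw [h'.2]
            exact ⟨c.flatten, w0, by simp [hQdef]⟩
      have hlen := congrArg List.length e
      have := move_full L hc ℓ hL w0 wl Q hw0 hwl hwrap (wl :: Y1) (Y2 ++ [w0])
        (by intro z hz
            rcases List.mem_cons.mp hz with rfl | hz
            exacts [hwl, hall z (by simp [hz])])
        (by intro z hz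
            rcases List.mem_append.mp hz with hz | hz
            · exact hall z (by simp [hz])
            · rw [List.mem_singleton.mp hz]; exact hw0)
        (by simp) (by simp) K
        (by simp only [hK, hlen]; simp; omega) hQ y (hall y (by simp))
      refine Relation.ReflTransGen.trans ?_ (ih (Y1 ++ [y]) (by simp [e]))
      simpa using this
  have start := conn_lift L hc ℓ hL _ [] ([false] ++ (P ++ P ++ [w0]).flatten)
    (by simpa using hS0) w0 wl hw0 hwl
  have path : Relation.ReflTransGen (Adj (Sform L w0 K Q))
      (w0 ++ [false] ++ (P ++ P ++ [w0]).flatten)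
      (wl ++ (P ++ P ++ [w0]).flatten ++ [false]) := by
    have := main (P ++ P) [] rfl
    have h2 := Relation.ReflTransGen.trans (by simpa using start) (by simpa using this)
    simpa using h2
  obtain ⟨l, hl, hlast⟩ := List.exists_isChain_cons_of_relationReflTransGen path
  set A := w0 ++ [false] ++ (P ++ P ++ [w0]).flatten with hA
  have hSA : Sform L w0 K Q A := by
    have := hS0 w0 hw0
    simpa [hA] using this
  have hSall : ∀ u ∈ A :: l, Sform L w0 K Q u := by
    intro u hu
    obtain ⟨j, hj, rfl⟩ := List.getElem_of_mem hu
    cases j with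
    | zero => exact hSA
    | succ j => exact (List.isChain_iff_getElem.mp hl j hj).2.1
  refine ⟨A :: l, ⟨by simp, ⟨K * ℓ + 1, fun v hv => Sform_length L w0 Q K ℓ hL v (hSall v hv)⟩,
    hl.imp (fun _ _ h => h.2.2), ?_⟩, Q, P ++ P, hPQ, hY, rfl, hSall⟩
  have e : (A :: l).getD ((A :: l).length - 1) [] = wl ++ (P ++ P ++ [w0]).flatten ++ [false] := by
    rw [List.getD_eq_getElem _ _ (by simp), ← hlast, List.getLast_eq_getElem]
  rw [e]
  have := hammingL_ctx [] ((P ++ P ++ [w0]).flatten ++ [false]) (w0 ++ [false]) ([false] ++ wl)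
    (by simp [hL w0 hw0, hL wl hwl, add_comm])
  rw [← this] at hwrap
  simpa [hA] using hwrap

lemma exists_levels : ∃ L : ℕ → List (List Bool), L 0 = [[false, true], [true, true]] ∧
    (∀ i, Good (L i)) ∧ ∀ i, Next (L i) (L (i + 1)) := by
  have h0 : Good [[false, true], [true, true]] := by
    refine ⟨by simp, ⟨2, by simp⟩, by simp [hammingL], by simp [hammingL]⟩
  choose f hf using fun L : {L // Good L} => exists_next L.1 L.2
  let s : ℕ → {L // Good L} := fun n =>
    Nat.rec ⟨_, h0⟩ (fun _ L => ⟨f L, (hf L).1⟩) n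
  exact ⟨fun i => (s i).1, rfl, fun i => (s i).2, fun i => (hf (s i)).2⟩

theorem exists_word_hierarchy :
    ∃ (nseq ℓseq : ℕ → ℕ) (w : ℕ → ℕ → List Bool),
      nseq 0 = 2 ∧ ℓseq 0 = 2 ∧
      w 0 0 = [false, true] ∧ w 0 1 = [true, true] ∧
      -- `w_{i,j} ∈ {0,1}^{ℓ_i}`
      (∀ i : ℕ, ∀ j < nseq i, (w i j).length = ℓseq i) ∧
      -- (a) `H(w_{i,j}, w_{i,j+1}) = 1` for `0 ≤ j ≤ n_i − 2`
      (∀ i : ℕ, ∀ j : ℕ, j + 2 ≤ nseq i → hammingL (w i j) (w i (j + 1)) = 1) ∧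
      -- (b) `H(w_{i,0} · 0, 0 · w_{i,n_i−1}) = 1`
      (∀ i : ℕ, hammingL (w i 0 ++ [false]) ([false] ++ w i (nseq i - 1)) = 1) ∧
      -- (c) every word of `W_{i−1} · W_{i−1}` is a factor of every word of `W_i`
      (∀ i : ℕ, 1 ≤ i → ∀ u ∈ lmul (Wset nseq w (i - 1)) (Wset nseq w (i - 1)),
        ∀ v ∈ Wset nseq w i, u <:+: v) ∧
      -- (d) `W_i ⊆ L_{i−1,k,1} · {ε, 0}` and `w_{i,0} ∈ L_{i−1,k,1}` for some `k ≥ 1`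
      (∀ i : ℕ, 1 ≤ i → ∃ k : ℕ, 1 ≤ k ∧
        Wset nseq w i ⊆ lmul (LL (Wset nseq w (i - 1)) k 1) {[], [false]} ∧
        w i 0 ∈ LL (Wset nseq w (i - 1)) k 1) ∧
      -- Property A: `W_m ⊆ L_{i,k,2} · {ε, 0}` and `w_{m,0} ∈ L_{i,k,2}` for some `k ≥ 1`
      (∀ i m : ℕ, i + 1 ≤ m → ∃ k : ℕ, 1 ≤ k ∧
        Wset nseq w m ⊆ lmul (LL (Wset nseq w i) k 2) {[], [false]} ∧
        w m 0 ∈ LL (Wset nseq w i) k 2) := by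
  obtain ⟨L, hL0, hG, hN⟩ := exists_levels
  have hW : ∀ i v, v ∈ Wset (fun i => (L i).length) (fun i j => (L i).getD j []) i ↔ v ∈ L i := by
    intro i v
    constructor
    · rintro ⟨j, hj, rfl⟩
      exact getD_mem _ _ hj
    · intro h
      obtain ⟨j, hj, rfl⟩ := List.getElem_of_mem h
      exact ⟨j, hj, (List.getD_eq_getElem _ _ hj).symm⟩
  have hpos : ∀ i, 0 < (L i).length := fun i => List.length_pos_iff.mpr (hG i).1
  refine ⟨fun i => (L i).length, fun i => ((L i).getD 0 []).length, fun i j => (L i).getD j [],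
    by simp [hL0], by simp [hL0], by simp [hL0], by simp [hL0], ?_, ?_, fun i => (hG i).2.2.2,
    ?_, ?_, ?_⟩
  · intro i j hj
    obtain ⟨ℓ, hℓ⟩ := (hG i).2.1
    exact (hℓ _ (getD_mem _ _ hj)).trans (hℓ _ (getD_mem _ _ (hpos i))).symm
  · intro i j hj
    have hj' : j + 2 ≤ (L i).length := hj
    have := List.isChain_iff_getElem.mp (hG i).2.2.1 j (by omega)
    simp only
    rw [List.getD_eq_getElem _ _ (by omega), List.getD_eq_getElem _ _ (by omega)]
    exact this
  · intro i hi u hu v hv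
    obtain ⟨i, rfl⟩ := Nat.exists_eq_add_of_le' hi
    rw [Nat.add_sub_cancel] at hu
    obtain ⟨a, ha, b, hb, rfl⟩ := hu
    rw [hW] at ha hb hv
    obtain ⟨Q, Y, hQ, -, -, hS⟩ := hN i
    obtain ⟨_, _, _, _, _, _, _, _, h⟩ := hS v hv
    exact (hQ a ha b hb).trans h
  · intro i hi
    obtain ⟨i, rfl⟩ := Nat.exists_eq_add_of_le' hi
    rw [Nat.add_sub_cancel]
    obtain ⟨Q, Y, hQ, hY, hA, hS⟩ := hN i
    have hV : ∀ v ∈ L i, v ∈ lmul (LL (Wset (fun i => (L i).length)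
        (fun i j => (L i).getD j []) i) 1 1) (zerosUpTo 0) := fun v hv =>
      ⟨v, LL_one _ _ _ ((hW i v).mpr hv), [], ⟨0, le_rfl, rfl⟩, by simp⟩
    have h0 := LL_one _ 1 _ ((hW i _).mpr (getD_mem (L i) 0 (hpos i)))
    refine ⟨1 * (Y.length + 2), by omega, ?_, ?_⟩
    · intro u hu
      rw [hW] at hu
      exact Sform_decomp (L i) _ Q _ _ 1 1 0 le_rfl (by omega) le_rfl hV h0 u (hS u hu)
    · simp only [hA]
      exact first_decomp (L i) _ _ 1 1 0 le_rfl le_rfl hV h0 Y hY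
  · intro i m him
    suffices h : ∀ m, i ≤ m → ∃ k : ℕ, 1 ≤ k ∧
        (∀ v ∈ L m, v ∈ lmul (LL (Wset (fun i => (L i).length)
          (fun i j => (L i).getD j []) i) k 2) {[], [false]}) ∧
        (L m).getD 0 [] ∈ LL (Wset (fun i => (L i).length)
          (fun i j => (L i).getD j []) i) k 2 by
      obtain ⟨k, hk, h1, h2⟩ := h m (by omega)
      exact ⟨k, hk, fun v hv => h1 v ((hW m v).mp hv), h2⟩
    intro m him
    induction m, him using Nat.le_induction with
    | base =>
      exact ⟨1, le_rfl, fun v hv => ⟨v, LL_one _ _ _ ((hW i v).mpr hv), [], by simp, by simp⟩,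
        LL_one _ _ _ ((hW i _).mpr (getD_mem (L i) 0 (hpos i)))⟩
    | succ m him ih =>
      obtain ⟨k, hk, h1, h2⟩ := ih
      obtain ⟨Q, Y, hQ, hY, hA, hS⟩ := hN m
      have hV : ∀ v ∈ L m, v ∈ lmul (LL (Wset (fun i => (L i).length)
          (fun i j => (L i).getD j []) i) k 2) (zerosUpTo 1) := by
        intro v hv
        obtain ⟨x, hx, z, hz, e⟩ := h1 v hv
        refine ⟨x, hx, z, ?_, e⟩
        rcases hz with rfl | rfl
        · exact ⟨0, by omega, rfl⟩
        · exact ⟨1, by omega, rfl⟩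
      refine ⟨k * (Y.length + 2), Nat.mul_pos hk (by omega), ?_, ?_⟩
      · intro u hu
        exact Sform_decomp (L m) _ Q _ _ k 2 1 hk le_rfl le_rfl hV h2 u (hS u hu)
      · rw [hA]
        exact first_decomp (L m) _ _ k 2 1 hk le_rfl hV h2 Y hY
end

section
/- There exists an infinite minimal language-connected subshift X over {0,1} that is uniquely ergodic: there is exactly one σ-invariant Borel probability measure on {0,1}^ℤ whose support is contained in X. -/
/-!
There exists an infinite minimal language-connected subshift over `{0,1}` that is
uniquely ergodic: there is exactly one shift-invariant Borel probability measure on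
`{0,1}^ℤ` whose support is contained in `X` (equivalently, giving zero measure to the
complement of the closed set `X`).
-/

/-- The shift map `σ` on the full shift `{0,1}^ℤ`, `(σ x) n = x (n + 1)`. -/
def shiftMap (x : ℤ → Bool) : ℤ → Bool := fun n => x (n + 1)

/-- A subshift: a nonempty closed shift-invariant subset of the full shift. -/
def IsSubshift (X : Set (ℤ → Bool)) : Prop :=
  X.Nonempty ∧ IsClosed X ∧ shiftMap '' X = X

/-- A subshift is minimal if it contains no nonempty closed shift-invariant proper subset. -/
def IsMinimalSubshift (X : Set (ℤ → Bool)) : Prop :=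
  IsSubshift X ∧ ∀ Y ⊆ X, IsClosed Y → shiftMap '' Y = Y → Y.Nonempty → Y = X

/-- `Lang X n` is the set of words of length `n` occurring in points of `X`. -/
def Lang (X : Set (ℤ → Bool)) (n : ℕ) : Set (Fin n → Bool) :=
  {w | ∃ x ∈ X, ∀ k : Fin n, w k = x ((k : ℕ) : ℤ)}

/-- A set of words `W ⊆ {0,1}^n` is Hamming-connected: any two words of `W` are joined by
a path inside `W` whose consecutive words differ in exactly one position. -/
def HammingConnected {n : ℕ} (W : Set (Fin n → Bool)) : Prop :=
  ∀ u ∈ W, ∀ v ∈ W,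
    Relation.ReflTransGen (fun a b => a ∈ W ∧ b ∈ W ∧ hammingDist a b = 1) u v

/-- A subshift is language-connected if `Lang X n` is Hamming-connected for every `n ≥ 1`. -/
def LanguageConnected (X : Set (ℤ → Bool)) : Prop :=
  ∀ n : ℕ, 1 ≤ n → HammingConnected (Lang X n)

open MeasureTheory Filter Topology

/-- The rotation angle: one radian. -/
noncomputable def rot : Circle := Circle.exp 1

/-- The real part of the `n`-th rotate of `z`. -/
noncomputable def cp (n : ℤ) (z : Circle) : ℝ := ((rot ^ n * z : Circle) : ℂ).re

/-- `x` is a possible half-circle coding of the orbit of `z`. -/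
def Compat (x : ℤ → Bool) (z : Circle) : Prop :=
  ∀ n : ℤ, (x n = true → 0 ≤ cp n z) ∧ (x n = false → cp n z ≤ 0)

/-- The coding subshift. -/
def XX : Set (ℤ → Bool) := {x | ∃ z, Compat x z}

lemma rot_zpow (n : ℤ) : rot ^ n = Circle.exp n := by
  rw [rot, ← Circle.exp_zsmul]; simp

lemma rot_zpow_eq_one {n : ℤ} (h : rot ^ n = 1) : n = 0 := by
  rw [rot_zpow, Circle.exp_eq_one] at h
  obtain ⟨m, hm⟩ := h
  by_contra hn
  have hirr := irrational_pi
  have hm0 : (m : ℝ) ≠ 0 := by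
    rintro h0
    rw [h0] at hm
    simp at hm
    exact hn hm
  apply hirr
  refine ⟨(n : ℚ) / (2 * m), ?_⟩
  push_cast
  field_simp
  linarith

lemma rot_dense : DenseRange (fun n : ℤ => rot ^ n) := by
  have h1 : DenseRange (· • ((1 : ℝ) : AddCircle (2 * Real.pi)) : ℤ → AddCircle (2 * Real.pi)) := by
    rw [AddCircle.denseRange_zsmul_coe_iff]
    have := irrational_pi
    have h2 : Irrational (2 * Real.pi) := by exact_mod_cast this.ratCast_mul (q := 2) (by norm_num)
    simpa using h2.inv
  have h2 := AddCircle.homeomorphCircle'.surjective.denseRange.comp h1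
    AddCircle.homeomorphCircle'.continuous
  convert h2 using 1
  funext n
  have : n • ((1 : ℝ) : AddCircle (2 * Real.pi)) = (((n : ℝ)) : AddCircle (2 * Real.pi)) := by
    rw [← AddCircle.coe_zsmul]; simp
  simp only [Function.comp, this]
  rw [AddCircle.homeomorphCircle'_apply_mk, rot_zpow]

lemma cp_continuous (n : ℤ) : Continuous (cp n) := by
  unfold cp
  exact Complex.continuous_re.comp (continuous_subtype_val.comp (continuous_const.mul continuous_id))

lemma cp_succ (n : ℤ) (z : Circle) : cp (n + 1) z = cp n (rot * z) := by
  unfold cp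
  rw [zpow_add_one, mul_assoc]

lemma sq_of_re_zero {u : Circle} (h : (u : ℂ).re = 0) : u ^ 2 = -1 := by
  have h1 : Complex.normSq (u : ℂ) = 1 := Circle.normSq_coe u
  rw [Complex.normSq_apply, h] at h1
  apply Circle.ext
  push_cast
  apply Complex.ext
  · simp [pow_two, h]; linarith
  · simp [pow_two, h]

lemma cp_zero_unique {n m : ℤ} {z : Circle} (hn : cp n z = 0) (hm : cp m z = 0) : n = m := by
  have h1 := sq_of_re_zero hn
  have h2 := sq_of_re_zero hm
  rw [← h2, mul_pow, mul_pow, mul_left_inj] at h1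
  have h3 : rot ^ (2 * (n - m)) = 1 := by
    rw [mul_comm, zpow_mul, zpow_sub]
    rw [show ((2 : ℤ)) = ((2 : ℕ) : ℤ) from rfl, zpow_natCast, mul_pow, h1, inv_pow]
    simp
  have := rot_zpow_eq_one h3
  omega

lemma compat_closed : IsClosed {p : (ℤ → Bool) × Circle | Compat p.1 p.2} := by
  have : {p : (ℤ → Bool) × Circle | Compat p.1 p.2} = ⋂ n : ℤ,
      (({p | p.1 n = false} ∪ {p | 0 ≤ cp n p.2}) ∩
        ({p | p.1 n = true} ∪ {p | cp n p.2 ≤ 0})) := by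
    ext p
    simp only [Compat, Set.mem_ofPred_eq, Set.mem_iInter, Set.mem_inter_iff, Set.mem_union]
    refine forall_congr' fun n => ?_
    cases p.1 n <;> simp
  rw [this]
  refine isClosed_iInter fun n => ?_
  have hc : Continuous fun p : (ℤ → Bool) × Circle => p.1 n := (continuous_apply n).comp continuous_fst
  have hd : Continuous fun p : (ℤ → Bool) × Circle => cp n p.2 := (cp_continuous n).comp continuous_snd
  exact ((isClosed_eq hc continuous_const).union (isClosed_le continuous_const hd)).inter
    ((isClosed_eq hc continuous_const).union (isClosed_le hd continuous_const))

lemma proj_closed {C : Set Circle} (hC : IsClosed C) :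
    IsClosed {x : ℤ → Bool | ∃ z ∈ C, Compat x z} := by
  have h := isClosedMap_fst_of_compactSpace (X := ℤ → Bool) (Y := Circle) _
    (compat_closed.inter (hC.preimage continuous_snd))
  convert h using 1
  ext x
  simp [and_comm]

lemma proj_closed' {C : Set (ℤ → Bool)} (hC : IsClosed C) :
    IsClosed {z : Circle | ∃ x ∈ C, Compat x z} := by
  have h := isClosedMap_snd_of_compactSpace (X := ℤ → Bool) (Y := Circle) _
    (compat_closed.inter (hC.preimage continuous_fst))
  convert h using 1
  ext x
  simp [and_comm]

lemma XX_closed : IsClosed XX := by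
  have := proj_closed isClosed_univ
  simpa [XX] using this

lemma compat_shift {x : ℤ → Bool} {z : Circle} (h : Compat x z) :
    Compat (shiftMap x) (rot * z) := by
  intro n
  rw [← cp_succ]
  exact h (n + 1)

lemma compat_unshift {x : ℤ → Bool} {z : Circle} (h : Compat x z) :
    Compat (fun n => x (n - 1)) (rot⁻¹ * z) := by
  intro n
  have := h (n - 1)
  have e : cp n (rot⁻¹ * z) = cp (n - 1) z := by
    have := cp_succ (n - 1) (rot⁻¹ * z)
    simpa using this
  rw [e]
  exact this

lemma shift_unshift (x : ℤ → Bool) : shiftMap (fun n => x (n - 1)) = x := by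
  funext n; simp [shiftMap]

/-- The coding map. -/
noncomputable def code (z : Circle) : ℤ → Bool := fun n => decide (0 ≤ cp n z)

lemma compat_code (z : Circle) : Compat (code z) z := by
  intro n
  simp only [code, decide_eq_true_eq, decide_eq_false_iff_not, not_le]
  exact ⟨id, le_of_lt⟩

lemma XX_subshift : IsSubshift XX := by
  refine ⟨⟨code 1, 1, compat_code 1⟩, XX_closed, ?_⟩
  ext x
  constructor
  · rintro ⟨y, ⟨z, hz⟩, rfl⟩
    exact ⟨_, compat_shift hz⟩
  · rintro ⟨z, hz⟩
    exact ⟨_, ⟨_, compat_unshift hz⟩, shift_unshift x⟩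

lemma compat_unique {x : ℤ → Bool} {z z' : Circle} (h : Compat x z) (h' : Compat x z') :
    z = z' := by
  by_contra hne
  have hne' : ((z : ℂ) - z') ≠ 0 := by
    rw [sub_ne_zero]
    exact fun h => hne (Circle.ext h)
  set d : ℂ := (z : ℂ) - z' with hd
  have hpos : 0 < ‖d‖ := norm_pos_iff.mpr hne'
  have hdpos : 0 < Complex.normSq d := Complex.normSq_pos.mpr hne'
  have hz : Complex.normSq (z : ℂ) = 1 := Circle.normSq_coe z
  have hz' : Complex.normSq (z' : ℂ) = 1 := Circle.normSq_coe z'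
  let w : Circle := ⟨(starRingEnd ℂ d) * ((‖d‖⁻¹ : ℝ) : ℂ), by
    rw [Submonoid.unitSphere, ← SetLike.mem_coe]
    change _ ∈ Metric.sphere (0 : ℂ) 1
    rw [mem_sphere_zero_iff_norm]
    rw [norm_mul, Complex.norm_conj, Complex.norm_real, norm_inv, norm_norm]
    exact mul_inv_cancel₀ hpos.ne'⟩
  have hw : (w : ℂ) = (starRingEnd ℂ d) * ((‖d‖⁻¹ : ℝ) : ℂ) := rfl
  have hip : 0 < ‖d‖⁻¹ := inv_pos.mpr hpos
  rw [Complex.normSq_apply] at hz hz' hdpos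
  simp only [hd, Complex.sub_re, Complex.sub_im] at hdpos
  have h1 : 0 < ((w * z : Circle) : ℂ).re := by
    have : ((w * z : Circle) : ℂ).re = ‖d‖⁻¹ *
      (((z : ℂ).re - (z' : ℂ).re) * (z : ℂ).re + ((z : ℂ).im - (z' : ℂ).im) * (z : ℂ).im) := by
      rw [Circle.coe_mul, hw]
      simp only [Complex.mul_re, Complex.mul_im, Complex.ofReal_re, Complex.ofReal_im,
        Complex.conj_re, Complex.conj_im, hd, Complex.sub_re, Complex.sub_im]
      ring
    rw [this]
    apply mul_pos hip
    nlinarith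
  have h2 : ((w * z' : Circle) : ℂ).re < 0 := by
    have : ((w * z' : Circle) : ℂ).re = ‖d‖⁻¹ *
      (((z : ℂ).re - (z' : ℂ).re) * (z' : ℂ).re + ((z : ℂ).im - (z' : ℂ).im) * (z' : ℂ).im) := by
      rw [Circle.coe_mul, hw]
      simp only [Complex.mul_re, Complex.mul_im, Complex.ofReal_re, Complex.ofReal_im,
        Complex.conj_re, Complex.conj_im, hd, Complex.sub_re, Complex.sub_im]
      ring
    rw [this]
    apply mul_neg_of_pos_of_neg hip
    nlinarith
  have hc : ∀ y : Circle, Continuous fun v : Circle => ((v * y : Circle) : ℂ).re := fun y =>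
    Complex.continuous_re.comp (continuous_subtype_val.comp (continuous_id.mul continuous_const))
  have hopen : IsOpen {v : Circle | 0 < ((v * z : Circle) : ℂ).re ∧
      ((v * z' : Circle) : ℂ).re < 0} :=
    (isOpen_lt continuous_const (hc z)).inter (isOpen_lt (hc z') continuous_const)
  obtain ⟨n, hn1, hn2⟩ := rot_dense.exists_mem_open hopen ⟨w, h1, h2⟩
  have hn1' : 0 < cp n z := hn1
  have hn2' : cp n z' < 0 := hn2
  cases hx : x n
  · exact absurd ((h n).2 hx) (not_le.mpr hn1')
  · exact absurd ((h' n).1 hx) (not_le.mpr hn2')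

/-- Two codings of the same point differ in at most one position. -/
lemma compat_diff {x y : ℤ → Bool} {z : Circle} (hx : Compat x z) (hy : Compat y z)
    {n m : ℤ} (hn : x n ≠ y n) (hm : x m ≠ y m) : n = m := by
  have key : ∀ k, x k ≠ y k → cp k z = 0 := by
    intro k hk
    have h1 := hx k
    have h2 := hy k
    revert h1 h2 hk
    cases x k <;> cases y k <;> simp <;> intros <;> linarith
  exact cp_zero_unique (key n hn) (key m hm)

lemma near_re_zero {u : Circle} (hu : (u : ℂ).re = 0) (b : Bool) {V : Set Circle} (hV : V ∈ 𝓝 u) :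
    ∃ v ∈ V, (b = true → 0 < (v : ℂ).re) ∧ (b = false → (v : ℂ).re < 0) := by
  have hn : Complex.normSq (u : ℂ) = 1 := Circle.normSq_coe u
  rw [Complex.normSq_apply, hu] at hn
  let s : ℝ := if b then -(u : ℂ).im else (u : ℂ).im
  have hre : ∀ t : ℝ, ((u * Circle.exp t : Circle) : ℂ).re = -(u : ℂ).im * Real.sin t := by
    intro t
    rw [Circle.coe_mul, Complex.mul_re, hu, Circle.coe_exp, Complex.exp_ofReal_mul_I_im]
    ring
  have hs : s = 1 ∨ s = -1 := by
    have : s * s = 1 := by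
      simp only [s]; split_ifs <;> linarith
    exact mul_self_eq_one_iff.mp this
  have hcont : Tendsto (fun t : ℝ => u * Circle.exp (s * t)) (𝓝[>] 0) (𝓝 u) := by
    have : Continuous (fun t : ℝ => u * Circle.exp (s * t)) := by fun_prop
    have h := this.tendsto 0
    simp at h
    exact h.mono_left nhdsWithin_le_nhds
  have h1 := hcont.eventually hV
  have h2 : ∀ᶠ t : ℝ in 𝓝[>] 0, t ∈ Set.Ioo (0 : ℝ) 1 := Ioo_mem_nhdsGT one_pos
  obtain ⟨t, ht1, ht2⟩ := (h1.and h2).exists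
  have hsin : 0 < Real.sin t := Real.sin_pos_of_pos_of_lt_pi ht2.1 (by linarith [Real.pi_gt_three, ht2.2])
  have hsint : Real.sin (s * t) = s * Real.sin t := by
    rcases hs with h | h <;> simp [h]
  refine ⟨_, ht1, ?_, ?_⟩
  · rintro rfl
    rw [hre, hsint]
    simp only [s, if_true]
    nlinarith
  · rintro rfl
    rw [hre, hsint]
    simp only [s]
    simp
    nlinarith

lemma strict_window {x : ℤ → Bool} {z : Circle} (h : Compat x z) (F : Finset ℤ) :
    ∃ w : Circle, ∀ n ∈ F, (x n = true → 0 < cp n w) ∧ (x n = false → cp n w < 0) := by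
  let P : ℤ → Set Circle := fun n => {w | (x n = true → 0 < cp n w) ∧ (x n = false → cp n w < 0)}
  have hP : ∀ n, cp n z ≠ 0 → P n ∈ 𝓝 z := by
    intro n hn
    have hc := (cp_continuous n).continuousAt (x := z)
    have hx := h n
    cases hb : x n
    · have : cp n z < 0 := lt_of_le_of_ne (hx.2 hb) hn
      filter_upwards [hc.eventually (gt_mem_nhds this)] with w hw
      exact ⟨fun h => by simp [hb] at h, fun _ => hw⟩
    · have : 0 < cp n z := lt_of_le_of_ne (hx.1 hb) hn.symm
      filter_upwards [hc.eventually (lt_mem_nhds this)] with w hw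
      exact ⟨fun _ => hw, fun h => by simp [hb] at h⟩
  by_cases hz : ∃ k, cp k z = 0
  · obtain ⟨k, hk⟩ := hz
    have hV : (⋂ n ∈ F.erase k, P n) ∈ 𝓝 z := by
      rw [Filter.biInter_finset_mem]
      intro n hn
      apply hP
      intro h0
      exact (Finset.mem_erase.mp hn).1 (cp_zero_unique h0 hk)
    have hV' : (fun v => (rot ^ k)⁻¹ * v) ⁻¹' (⋂ n ∈ F.erase k, P n) ∈ 𝓝 (rot ^ k * z) := by
      have : Continuous fun v : Circle => (rot ^ k)⁻¹ * v := by fun_prop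
      apply this.continuousAt
      simpa using hV
    obtain ⟨v, hv, hv2⟩ := near_re_zero (u := rot ^ k * z) hk (x k) hV'
    refine ⟨(rot ^ k)⁻¹ * v, fun n hn => ?_⟩
    by_cases hnk : n = k
    · subst hnk
      simpa [cp] using hv2
    · simp only [Set.mem_preimage, Set.mem_iInter] at hv
      exact hv n (Finset.mem_erase.mpr ⟨hnk, hn⟩)
  · push Not at hz
    have hV : (⋂ n ∈ F, P n) ∈ 𝓝 z := by
      rw [Filter.biInter_finset_mem]
      exact fun n _ => hP n (hz n)
    have := mem_of_mem_nhds hV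
    simp only [Set.mem_iInter] at this
    exact ⟨z, this⟩

lemma proj_full {Y : Set (ℤ → Bool)} (hYX : Y ⊆ XX) (hc : IsClosed Y) (hs : shiftMap '' Y = Y)
    (hne : Y.Nonempty) (z : Circle) : ∃ x ∈ Y, Compat x z := by
  have hcl := proj_closed' hc
  obtain ⟨y, hy⟩ := hne
  obtain ⟨w, hw⟩ := hYX hy
  have hup : ∀ w, (∃ x ∈ Y, Compat x w) → ∃ x ∈ Y, Compat x (rot * w) := by
    rintro w ⟨x, hx, hxw⟩
    exact ⟨_, hs ▸ Set.mem_image_of_mem _ hx, compat_shift hxw⟩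
  have hdown : ∀ w, (∃ x ∈ Y, Compat x w) → ∃ x ∈ Y, Compat x (rot⁻¹ * w) := by
    rintro w ⟨x, hx, hxw⟩
    rw [← hs] at hx
    obtain ⟨y, hy, rfl⟩ := hx
    refine ⟨y, hy, ?_⟩
    have := compat_unshift hxw
    have e : (fun n => shiftMap y (n - 1)) = y := by funext n; simp [shiftMap]
    rwa [e] at this
  have hall : ∀ n : ℤ, ∃ x ∈ Y, Compat x (rot ^ n * w) := by
    intro n
    induction n using Int.induction_on with
    | zero => simpa using ⟨y, hy, hw⟩
    | succ n ih =>
      have := hup _ ih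
      rwa [← mul_assoc, mul_comm rot, ← zpow_add_one] at this
    | pred n ih =>
      have := hdown _ ih
      rwa [← mul_assoc, mul_comm rot⁻¹, ← zpow_sub_one] at this
  have hd : DenseRange fun n : ℤ => rot ^ n * w := by
    have := (mul_left_surjective w).denseRange.comp rot_dense (by fun_prop)
    convert this using 1
    funext n
    simp [mul_comm]
  have : closure (Set.range fun n : ℤ => rot ^ n * w) ⊆ {z : Circle | ∃ x ∈ Y, Compat x z} := by
    apply hcl.closure_subset_iff.mpr
    rintro _ ⟨n, rfl⟩
    exact hall n
  exact this (hd z)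

lemma XX_minimal : IsMinimalSubshift XX := by
  refine ⟨XX_subshift, fun Y hYX hc hs hne => Set.Subset.antisymm hYX ?_⟩
  rintro x ⟨z, hz⟩
  rw [← hc.closure_eq, mem_closure_iff]
  intro o ho hxo
  obtain ⟨F, u, hu, hFu⟩ := isOpen_pi_iff.mp ho x hxo
  obtain ⟨w, hw⟩ := strict_window hz F
  obtain ⟨y, hy, hyw⟩ := proj_full hYX hc hs hne w
  refine ⟨y, hFu ?_, hy⟩
  intro n hn
  have e : y n = x n := by
    have h1 := hw n hn
    have h2 := hyw n
    revert h1 h2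
    cases x n <;> cases y n <;> simp
  rw [e]
  exact (hu n hn).2

lemma XX_infinite : XX.Infinite := by
  intro hfin
  have hinf : Infinite Circle := Infinite.of_injective (fun n : ℤ => rot ^ n) (by
    intro n m h
    have : rot ^ (n - m) = 1 := by
      rw [zpow_sub]; simp only at h; rw [h]; simp
    have := rot_zpow_eq_one this
    omega)
  have : Set.InjOn code Set.univ := by
    intro z _ z' _ h
    exact compat_unique (compat_code z) (h ▸ compat_code z')
  have h2 := Set.infinite_univ (α := Circle)
  exact (h2.image this) (hfin.subset (by rintro _ ⟨z, -, rfl⟩; exact ⟨z, compat_code z⟩))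

lemma XX_connected : LanguageConnected XX := by
  intro n _ u hu v hv
  let R := Relation.ReflTransGen
    (fun a b : Fin n → Bool => a ∈ Lang XX n ∧ b ∈ Lang XX n ∧ hammingDist a b = 1) u
  let word : (ℤ → Bool) → (Fin n → Bool) := fun x k => x ((k : ℕ) : ℤ)
  have hword : Continuous word := by
    apply continuous_pi; intro k; exact continuous_apply _
  have hcl : ∀ S : Set (Fin n → Bool), IsClosed {z : Circle | ∃ x ∈ word ⁻¹' S, Compat x z} :=
    fun S => proj_closed' ((isClosed_discrete S).preimage hword)
  by_contra hcon
  obtain ⟨x, ⟨z, hxz⟩, hux⟩ := hu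
  obtain ⟨y, ⟨z', hyz⟩, hvy⟩ := hv
  have ex : word x = u := by funext k; exact (hux k).symm
  have ey : word y = v := by funext k; exact (hvy k).symm
  have hpre : IsPreconnected (Set.univ : Set Circle) := isPreconnected_univ
  rw [isPreconnected_closed_iff] at hpre
  obtain ⟨w, -, ⟨a, ha, haw⟩, ⟨b, hb, hbw⟩⟩ := hpre _ _ (hcl {a | R a}) (hcl {a | ¬ R a}) (by
    intro w _
    by_cases h : R (word (code w))
    · exact Or.inl ⟨_, h, compat_code w⟩
    · exact Or.inr ⟨_, h, compat_code w⟩)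
    ⟨z, trivial, x, by
      show R (word x)
      rw [ex], hxz⟩
    ⟨z', trivial, y, by
      show ¬ R (word y)
      rw [ey]; exact hcon, hyz⟩
  have hle : hammingDist (word a) (word b) ≤ 1 := by
    unfold hammingDist
    rw [Finset.card_le_one]
    intro i hi j hj
    simp only [Finset.mem_filter, Finset.mem_univ, true_and] at hi hj
    have := compat_diff haw hbw hi hj
    apply Fin.ext
    exact_mod_cast this
  have ha' : R (word a) := ha
  apply (show ¬ R (word b) from hb)
  rcases Nat.lt_or_ge (hammingDist (word a) (word b)) 1 with h | h
  · have : word a = word b := hammingDist_eq_zero.mp (by omega)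
    rwa [← this]
  · exact ha'.tail ⟨⟨a, ⟨w, haw⟩, fun _ => rfl⟩, ⟨b, ⟨w, hbw⟩, fun _ => rfl⟩, le_antisymm hle h⟩

noncomputable instance circleMeasurableSpace : MeasurableSpace Circle := borel Circle
instance circleBorelSpace : BorelSpace Circle := ⟨rfl⟩

lemma code_measurable : Measurable code := by
  apply measurable_pi_lambda
  intro n
  have : MeasurableSet {z : Circle | 0 ≤ cp n z} :=
    (isClosed_le continuous_const (cp_continuous n)).measurableSet
  exact measurable_to_bool (by convert this using 1; ext z; simp [code])

lemma code_shift (z : Circle) : shiftMap (code z) = code (rot * z) := by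
  funext n
  simp [shiftMap, code, cp_succ]

open Classical in
/-- The base point of a coding. -/
noncomputable def base (x : ℤ → Bool) : Circle := if h : ∃ z, Compat x z then h.choose else 1

lemma base_compat {x : ℤ → Bool} (hx : x ∈ XX) : Compat x (base x) := by
  have hx' : ∃ z, Compat x z := hx
  rw [base, dif_pos hx']
  exact hx'.choose_spec

lemma base_measurable : Measurable base := by
  apply measurable_of_isClosed
  intro C hC
  have hX := XX_closed.measurableSet
  have hm := (proj_closed hC).measurableSet
  have e : base ⁻¹' C = {x : ℤ → Bool | ∃ z ∈ C, Compat x z} ∪ (XXᶜ ∩ {_x | (1 : Circle) ∈ C}) := by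
    ext x
    by_cases hx : x ∈ XX
    · simp only [Set.mem_preimage, Set.mem_union, Set.mem_inter_iff, Set.mem_compl_iff, hx,
        not_true, false_and, or_false, Set.mem_ofPred_eq]
      constructor
      · exact fun h => ⟨_, h, base_compat hx⟩
      · rintro ⟨z, hz, hxz⟩
        rwa [compat_unique (base_compat hx) hxz]
    · have hx' : ¬ ∃ z, Compat x z := hx
      have h1 : ¬ ∃ z ∈ C, Compat x z := fun ⟨z, _, h⟩ => hx ⟨z, h⟩
      simp [base, dif_neg hx', hx, h1]
  rw [e]
  exact hm.union (hX.compl.inter (MeasurableSet.const _))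

lemma shift_measurable : Measurable shiftMap :=
  measurable_pi_lambda _ fun n => measurable_pi_apply (n + 1)

/-- A probability measure invariant under the irrational rotation is Haar. -/
lemma rot_invariant_haar (ν : Measure Circle) [IsProbabilityMeasure ν]
    (h : ν.map (fun z => rot * z) = ν) : ν.IsHaarMeasure := by
  have hmm : ∀ g : Circle, Measurable fun z : Circle => g * z := fun g =>
    (continuous_const.mul continuous_id).measurable
  have hup : ∀ g, ν.map (fun z => g * z) = ν → ν.map (fun z => (rot * g) * z) = ν := by
    intro g hg
    conv_rhs => rw [← h, ← hg, Measure.map_map (hmm _) (hmm _)]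
    congr 1
    funext z
    simp [mul_assoc]
  have hinv : ν.map (fun z => rot⁻¹ * z) = ν := by
    conv_lhs => rw [← h, Measure.map_map (hmm _) (hmm _)]
    simp [Function.comp_def]
  have hdown : ∀ g, ν.map (fun z => g * z) = ν → ν.map (fun z => (rot⁻¹ * g) * z) = ν := by
    intro g hg
    conv_rhs => rw [← hinv, ← hg, Measure.map_map (hmm _) (hmm _)]
    congr 1
    funext z
    simp [mul_assoc]
  have hall : ∀ n : ℤ, ν.map (fun z => rot ^ n * z) = ν := by
    intro n
    induction n using Int.induction_on with
    | zero => simp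
    | succ n ih =>
      have := hup _ ih
      rwa [mul_comm rot, ← zpow_add_one] at this
    | pred n ih =>
      have := hdown _ ih
      rwa [mul_comm rot⁻¹, ← zpow_sub_one] at this
  have hli : ν.IsMulLeftInvariant := by
    constructor
    intro g
    have : IsProbabilityMeasure (ν.map (fun z => g * z)) :=
      Measure.isProbabilityMeasure_map (hmm g).aemeasurable
    apply ext_of_forall_integral_eq_of_IsFiniteMeasure
    intro f
    have hint : ∀ g : Circle, ∫ z, f z ∂(ν.map (fun z => g * z)) = ∫ z, f (g * z) ∂ν := fun g =>
      integral_map (hmm g).aemeasurable f.continuous.aestronglyMeasurable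
    have hc : Continuous fun g : Circle => ∫ z, f (g * z) ∂ν := by
      apply continuous_of_dominated (bound := fun _ => ‖f‖)
      · intro g
        exact (f.continuous.comp (continuous_const.mul continuous_id)).aestronglyMeasurable
      · intro g
        exact Eventually.of_forall fun z => f.norm_coe_le_norm _
      · exact integrable_const _
      · exact Eventually.of_forall fun z => f.continuous.comp (continuous_id.mul continuous_const)
    have heq := rot_dense.equalizer hc (continuous_const (y := ∫ z, f z ∂ν)) (by
      funext n
      simp only [Function.comp]
      rw [← hint, hall])
    rw [hint]
    exact congrFun heq g
  exact Measure.isHaarMeasure_of_isCompact_nonempty_interior ν Set.univ isCompact_univ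
    (by simp) (by simp) (by simp)

lemma bad_countable : {z : Circle | ∃ n, cp n z = 0}.Countable := by
  have : {z : Circle | ∃ n, cp n z = 0} = ⋃ n, {z | cp n z = 0} := by ext; simp
  rw [this]
  apply Set.countable_iUnion
  intro n
  apply Set.Finite.countable
  have hI : ∀ z : Circle, (z : ℂ).re = 0 → (z : ℂ) = Complex.I ∨ (z : ℂ) = -Complex.I := by
    intro z hz
    have := sq_of_re_zero hz
    have h2 : (z : ℂ) ^ 2 = Complex.I ^ 2 := by
      have := congrArg (fun w : Circle => (w : ℂ)) this
      simpa using this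
    exact sq_eq_sq_iff_eq_or_eq_neg.mp h2
  apply Set.Finite.of_finite_image (f := fun z : Circle => ((rot ^ n * z : Circle) : ℂ))
  · apply Set.Finite.subset (Set.toFinite {Complex.I, -Complex.I})
    rintro _ ⟨z, hz, rfl⟩
    exact hI _ hz
  · intro z _ z' _ h
    exact mul_left_cancel (Circle.ext h)

lemma bad_null (ν : Measure Circle) [ν.IsHaarMeasure] : ν {z : Circle | ∃ n, cp n z = 0} = 0 := by
  have : (𝓝[≠] (1 : Circle)).NeBot := by
    have : Nontrivial Circle := ⟨1, rot, fun h => by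
      have := rot_zpow_eq_one (n := 1) (by simp [← h])
      omega⟩
    infer_instance
  exact bad_countable.measure_zero ν

/-- An invariant probability measure on `XX` is the image of its projection. -/
lemma measure_structure (μ : Measure (ℤ → Bool)) [IsProbabilityMeasure μ]
    (hinv : ∀ A : Set (ℤ → Bool), MeasurableSet A → μ (shiftMap ⁻¹' A) = μ A)
    (hX : μ XXᶜ = 0) :
    ∃ ν : Measure Circle, IsProbabilityMeasure ν ∧ ν.IsHaarMeasure ∧ μ = ν.map code := by
  have hae : ∀ᵐ x ∂μ, x ∈ XX := by
    rw [ae_iff]; exact hX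
  have hrot : Measurable fun z : Circle => rot * z :=
    (continuous_const.mul continuous_id).measurable
  have hp : IsProbabilityMeasure (μ.map base) :=
    Measure.isProbabilityMeasure_map base_measurable.aemeasurable
  have hshift : μ.map shiftMap = μ := by
    ext A hA
    rw [Measure.map_apply shift_measurable hA, hinv A hA]
  have hν : (μ.map base).map (fun z => rot * z) = μ.map base := by
    conv_rhs => rw [← hshift]
    rw [Measure.map_map hrot base_measurable, Measure.map_map base_measurable shift_measurable]
    apply Measure.map_congr
    filter_upwards [hae] with x hx
    have h1 := compat_shift (base_compat hx)
    exact compat_unique h1 (base_compat ⟨_, h1⟩)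
  have hH := rot_invariant_haar _ hν
  refine ⟨μ.map base, hp, hH, ?_⟩
  rw [Measure.map_map code_measurable base_measurable]
  have hb : ∀ᵐ x ∂μ, ¬ ∃ n, cp n (base x) = 0 := by
    have h0 : ∀ᵐ z ∂(μ.map base), ¬ ∃ n, cp n z = 0 := by
      rw [ae_iff]; simpa using bad_null (μ.map base)
    exact ae_of_ae_map base_measurable.aemeasurable h0
  conv_lhs => rw [← Measure.map_id (μ := μ)]
  apply Measure.map_congr
  filter_upwards [hae, hb] with x hx hx2
  funext n
  by_contra hne
  apply hx2
  refine ⟨n, ?_⟩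
  have h1 := base_compat hx n
  have h2 := compat_code (base x) n
  simp only [id, Function.comp] at hne
  revert h1 h2 hne
  cases x n <;> cases code (base x) n <;> simp <;> intros <;> linarith

theorem exists_minimal_language_connected_uniquely_ergodic :
    ∃ X : Set (ℤ → Bool), IsMinimalSubshift X ∧ X.Infinite ∧ LanguageConnected X ∧
      ∃! μ : MeasureTheory.Measure (ℤ → Bool),
        MeasureTheory.IsProbabilityMeasure μ ∧
        (∀ A : Set (ℤ → Bool), MeasurableSet A → μ (shiftMap ⁻¹' A) = μ A) ∧
        μ Xᶜ = 0 := by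
  refine ⟨XX, XX_minimal, XX_infinite, XX_connected, ?_⟩
  let K : TopologicalSpace.PositiveCompacts Circle := ⊤
  let ν : Measure Circle := Measure.haarMeasure K
  have hν1 : IsProbabilityMeasure ν := ⟨Measure.haarMeasure_self (K₀ := K)⟩
  have hνH : ν.IsHaarMeasure := inferInstance
  refine ⟨ν.map code, ⟨?_, ?_, ?_⟩, ?_⟩
  · exact Measure.isProbabilityMeasure_map code_measurable.aemeasurable
  · intro A hA
    rw [Measure.map_apply code_measurable (shift_measurable hA),
      Measure.map_apply code_measurable hA]
    have : code ⁻¹' (shiftMap ⁻¹' A) = (fun z => rot * z) ⁻¹' (code ⁻¹' A) := by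
      ext z
      simp [code_shift]
    rw [this, measure_preimage_mul]
  · rw [Measure.map_apply code_measurable XX_closed.measurableSet.compl]
    have : code ⁻¹' XXᶜ = ∅ := by
      ext z
      simp only [Set.mem_preimage, Set.mem_compl_iff, Set.mem_empty_iff_false, iff_false, not_not]
      exact ⟨z, compat_code z⟩
    rw [this, measure_empty]
  · rintro μ ⟨hμ1, hμ2, hμ3⟩
    obtain ⟨ν', h1, h2, h3⟩ := measure_structure μ hμ2 hμ3
    rw [h3, Measure.isHaarMeasure_eq_of_isProbabilityMeasure ν' ν]
end

section
/- There exists an infinite minimal language-connected subshift X over {0,1} such that the topological entropy of the shift map σ restricted to X is strictly positive. -/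
namespace LCPE

/-- Periods. -/
def P : ℕ → ℕ
  | 0 => 1
  | k + 1 => P k * 2 ^ (P k + k + 2)

lemma P_pos (k : ℕ) : 0 < P k := by
  induction k with
  | zero => simp [P]
  | succ k ih => simp only [P]; positivity

lemma P_gt (k : ℕ) : k < P k := by
  induction k with
  | zero => simp [P]
  | succ k ih =>
    simp only [P]
    have h1 : 2 ≤ 2 ^ (P k + k + 2) := by
      calc 2 = 2 ^ 1 := rfl
        _ ≤ _ := Nat.pow_le_pow_right (by norm_num) (by omega)
    nlinarith

lemma P_dvd {i k : ℕ} (h : i ≤ k) : P i ∣ P k := by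
  induction h with
  | refl => exact dvd_rfl
  | step _ ih => exact ih.trans (Dvd.intro _ rfl)

/-- The `k`-th (shifted) digit. -/
def dig (k : ℕ) (n : ℤ) : ℕ := ((n / (P k : ℤ) + 1) % ((2 ^ (P k + k + 2) : ℕ) : ℤ)).toNat

/-- Position `n` is filled at stage `k`. -/
def Filled (k : ℕ) (n : ℤ) : Prop := dig k n < 2 ^ (P k)

lemma dig_add {i K : ℕ} (h : i < K) (n j : ℤ) : dig i (n + j * P K) = dig i n := by
  obtain ⟨c, hc⟩ := P_dvd (Nat.succ_le_of_lt h)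
  have hp : (P i : ℤ) ≠ 0 := by exact_mod_cast (P_pos i).ne'
  have h1 : n + j * (P K : ℤ) = n + P i * (((2 ^ (P i + i + 2) : ℕ) : ℤ) * (c * j)) := by
    rw [hc]; simp only [P]; push_cast; ring
  unfold dig
  rw [h1, Int.add_mul_ediv_left _ _ hp]
  congr 1
  rw [add_right_comm, Int.add_mul_emod_self_left]

lemma mod_add {i K : ℕ} (h : i ≤ K) (n j : ℤ) : (n + j * P K) % (P i : ℤ) = n % P i := by
  obtain ⟨c, hc⟩ := P_dvd h
  have h1 : n + j * (P K : ℤ) = n + P i * (c * j) := by rw [hc]; push_cast; ring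
  rw [h1, Int.add_mul_emod_self_left]

lemma exists_filled (n : ℤ) : ∃ k, Filled k n := by
  refine ⟨n.natAbs, ?_⟩
  have h := P_gt n.natAbs
  have h2 : 1 < 2 ^ (P n.natAbs) := Nat.one_lt_two_pow (P_pos _).ne'
  have h3 : 1 < 2 ^ (P n.natAbs + n.natAbs + 2) := Nat.one_lt_two_pow (by omega)
  unfold Filled dig
  generalize P n.natAbs + n.natAbs + 2 = e at *
  rcases le_or_gt 0 n with hn | hn
  · rw [Int.ediv_eq_zero_of_lt hn (by omega), zero_add, Int.emod_eq_of_lt (by norm_num) (by exact_mod_cast h3)]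
    exact h2
  · have : n / (P n.natAbs : ℤ) = -1 := by
      rw [Int.ediv_eq_iff_of_pos (by omega)]
      constructor <;> omega
    rw [this]; simp

open Classical in
/-- The stage at which `n` is filled. -/
noncomputable def stage (n : ℤ) : ℕ := Nat.find (exists_filled n)

/-- The Toeplitz sequence. -/
noncomputable def y (n : ℤ) : Bool :=
  Nat.testBit (dig (stage n) n) ((n % (P (stage n) : ℤ)).toNat)

lemma stage_eq {n : ℤ} {k : ℕ} (h : Filled k n) (h' : ∀ i < k, ¬ Filled i n) : stage n = k := by
  classical
  unfold stage
  rw [Nat.find_eq_iff]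
  exact ⟨h, h'⟩

lemma stage_spec (n : ℤ) : Filled (stage n) n := by
  classical
  exact Nat.find_spec (exists_filled n)

lemma stage_min (n : ℤ) (i : ℕ) (h : i < stage n) : ¬ Filled i n := by
  classical
  exact Nat.find_min (exists_filled n) h

lemma y_add {n : ℤ} {K : ℕ} (h : stage n < K) (j : ℤ) : y (n + j * P K) = y n := by
  have hs : stage (n + j * P K) = stage n := by
    apply stage_eq
    · unfold Filled; rw [dig_add h]; exact stage_spec n
    · intro i hi
      unfold Filled; rw [dig_add (hi.trans h)]; exact stage_min n i hi
  unfold y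
  rw [hs, dig_add h, mod_add h.le]

open Classical in
/-- Holes. -/
noncomputable def H (k : ℕ) : Finset ℕ := (Finset.range (P k)).filter (fun r => ∀ i < k, ¬ Filled i (r : ℤ))

lemma mem_H {k r : ℕ} : r ∈ H k ↔ r < P k ∧ ∀ i < k, ¬ Filled i (r : ℤ) := by
  simp [H]

lemma card_H_succ (k : ℕ) :
    (H k).card * (2 ^ (P k + k + 2) - 2 ^ P k) ≤ (H (k + 1)).card := by
  have hD : (Finset.Ico (2 ^ P k - 1) (2 ^ (P k + k + 2) - 1)).card
      = 2 ^ (P k + k + 2) - 2 ^ P k := by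
    rw [Nat.card_Ico]
    have := Nat.one_le_two_pow (n := P k)
    have : 1 ≤ 2 ^ (P k + k + 2) := Nat.one_le_two_pow
    omega
  rw [← hD, ← Finset.card_product]
  apply Finset.card_le_card_of_injOn (fun x => x.1 + P k * x.2)
  · rintro ⟨r, d⟩ hx
    simp only [Finset.coe_product, Set.mem_prod, Finset.mem_coe, Finset.mem_Ico, mem_H] at hx
    obtain ⟨⟨hr, hf⟩, hd1, hd2⟩ := hx
    simp only [Finset.mem_coe, mem_H]
    constructor
    · simp only [P]
      calc r + P k * d < P k * (d + 1) := by rw [mul_add]; omega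
        _ ≤ _ := Nat.mul_le_mul_left _ (by omega)
    · intro i hi
      rcases Nat.lt_succ_iff_lt_or_eq.mp hi with hi | rfl
      · have := dig_add hi (r : ℤ) (d : ℤ)
        unfold Filled at *
        push_cast
        rw [mul_comm, this]
        exact hf i hi
      · unfold Filled dig
        have hp : (P i : ℤ) ≠ 0 := by exact_mod_cast (P_pos i).ne'
        rw [Nat.cast_add, Nat.cast_mul, Int.add_mul_ediv_left _ _ hp, Int.ediv_eq_zero_of_lt (by omega) (by omega),
          Int.emod_eq_of_lt (by omega) (by omega)]
        omega
  · rintro ⟨r, d⟩ hx ⟨r', d'⟩ hx' heq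
    simp only [Finset.coe_product, Set.mem_prod, Finset.mem_coe, mem_H] at hx hx'
    simp only at heq
    have h1 : r = r' := by
      have := congrArg (· % P k) heq
      simpa [Nat.mod_eq_of_lt hx.1.1, Nat.mod_eq_of_lt hx'.1.1] using this
    subst h1
    have : d = d' := Nat.eq_of_mul_eq_mul_left (P_pos k) (by omega)
    rw [this]

lemma card_H (k : ℕ) : (P k : ℝ) * (1 / 2 + (1 / 2) ^ (k + 1)) ≤ (H k).card := by
  induction k with
  | zero => simp [P, H]; norm_num
  | succ k ih =>
    have h1 := card_H_succ k
    have h2 : ((2 ^ (P k + k + 2) - 2 ^ P k : ℕ) : ℝ)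
        = 2 ^ (P k + k + 2) * (1 - (1 / 2) ^ (k + 1) / 2) := by
      rw [Nat.cast_sub (Nat.pow_le_pow_right (by norm_num) (by omega))]
      push_cast
      rw [add_assoc, pow_add, mul_sub, mul_one]
      congr 1
      rw [mul_assoc, ← mul_div_assoc, show k + 2 = (k + 1) + 1 from rfl, pow_succ]
      have : (2 : ℝ) ^ (k + 1) * (1 / 2) ^ (k + 1) = 1 := by
        rw [← mul_pow]; norm_num
      linear_combination (-(2 : ℝ) ^ P k) * this
    have h3 : ((H k).card : ℝ) * (2 ^ (P k + k + 2) * (1 - (1 / 2) ^ (k + 1) / 2))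
        ≤ (H (k + 1)).card := by
      rw [← h2]; exact_mod_cast h1
    refine le_trans ?_ h3
    have hx0 : (0 : ℝ) ≤ (1 / 2) ^ (k + 1) := by positivity
    have hx : ((1 : ℝ) / 2) ^ (k + 1) ≤ 1 / 2 := by
      rw [pow_succ]
      have : ((1 : ℝ) / 2) ^ k ≤ 1 := pow_le_one₀ (by norm_num) (by norm_num)
      linarith
    have hP : ((P (k + 1) : ℕ) : ℝ) = P k * 2 ^ (P k + k + 2) := by simp [P]
    rw [hP, pow_succ _ (k + 1)]
    generalize ((1 : ℝ) / 2) ^ (k + 1) = x at *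
    have hQ : (0 : ℝ) ≤ 2 ^ (P k + k + 2) := by positivity
    calc (P k : ℝ) * 2 ^ (P k + k + 2) * (1 / 2 + x * (1 / 2))
        ≤ (P k : ℝ) * 2 ^ (P k + k + 2) * ((1 / 2 + x) * (1 - x / 2)) := by
          apply mul_le_mul_of_nonneg_left _ (by positivity)
          nlinarith
      _ = (P k * (1 / 2 + x)) * (2 ^ (P k + k + 2) * (1 - x / 2)) := by ring
      _ ≤ _ := by
          apply mul_le_mul_of_nonneg_right ih
          apply mul_nonneg hQ; linarith

/-- For a prescribed pattern, there is a place where the holes show it. -/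
lemma y_hole (k : ℕ) (f : Fin (P k) → Bool) (r : ℕ) (hr : r ∈ H k) (hrk : r < P k) :
    y (((Nat.ofBits f : ℤ) - 1) * P k + r) = f ⟨r, hrk⟩ := by
  set d := Nat.ofBits f with hd
  have hdlt : d < 2 ^ P k := Nat.ofBits_lt_two_pow f
  have hd2 : d < 2 ^ (P k + k + 2) :=
    hdlt.trans_le (Nat.pow_le_pow_right (by norm_num) (by omega))
  have hp : (P k : ℤ) ≠ 0 := by exact_mod_cast (P_pos k).ne'
  have hdig : dig k (((d : ℤ) - 1) * P k + r) = d := by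
    unfold dig
    rw [add_comm (((d : ℤ) - 1) * (P k : ℤ)), Int.add_mul_ediv_right _ _ hp, Int.ediv_eq_zero_of_lt (by omega) (by omega)]
    rw [Int.emod_eq_of_lt (by omega) (by omega)]
    omega
  have hs : stage (((d : ℤ) - 1) * P k + r) = k := by
    apply stage_eq
    · unfold Filled; rw [hdig]; exact hdlt
    · intro i hi
      unfold Filled
      rw [add_comm, dig_add hi]
      exact (mem_H.1 hr).2 i hi
  unfold y
  rw [hs, hdig, add_comm, Int.add_mul_emod_self_right, Int.emod_eq_of_lt (by omega) (by omega)]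
  rw [Int.toNat_natCast, hd, Nat.testBit_ofBits_lt]

/-- The slope. -/
noncomputable def α : ℝ := √2 / 2

lemma α_irr : Irrational α := by
  have := irrational_sqrt_two.div_natCast (m := 2) (by norm_num)
  simpa [α] using this

lemma α_gt : 1 / 2 < α := by
  unfold α
  have : (1 : ℝ) < √2 := by rw [Real.lt_sqrt] <;> norm_num
  linarith

lemma α_lt : α < 1 := by
  unfold α
  have : √2 < (2 : ℝ) := by rw [Real.sqrt_lt'] <;> norm_num
  linarith

/-- The word read from real position `s`. -/
noncomputable def wd (n : ℕ) (s : ℝ) : Fin n → Bool := fun k => y ⌊s + (k : ℕ) * α⌋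

/-- The subshift. -/
def X : Set (ℤ → Bool) :=
  {x | ∀ (a : ℤ) (n : ℕ), ∃ s : ℝ, ∀ k : ℕ, k < n → x (a + k) = y ⌊s + k * α⌋}

/-- Points. -/
noncomputable def pt (s : ℝ) : ℤ → Bool := fun j => y ⌊s + j * α⌋

lemma pt_mem (s : ℝ) : pt s ∈ X := by
  intro a n
  refine ⟨s + a * α, fun k _ => ?_⟩
  simp only [pt]
  congr 2
  push_cast; ring

lemma lang_eq (n : ℕ) : Lang X n = Set.range (wd n) := by
  ext w
  constructor
  · rintro ⟨x, hx, hw⟩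
    obtain ⟨s, hs⟩ := hx 0 n
    refine ⟨s, funext fun k => ?_⟩
    rw [hw k, ← zero_add ((k : ℕ) : ℤ), hs k k.2]; rfl
  · rintro ⟨s, rfl⟩
    exact ⟨pt s, pt_mem s, fun k => by simp [wd, pt]⟩

lemma exists_hit (s s0 p ε : ℝ) (m l : ℤ) (hp : 0 < p) (h0 : 0 < m * α + l * p)
    (h1 : m * α + l * p < ε) :
    ∃ i j : ℤ, |i| ≤ |m| * (⌈p / (m * α + l * p)⌉) ∧ s0 + j * p ≤ s + i * α ∧
      s + i * α < s0 + j * p + ε := by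
  set θ := m * α + l * p with hθ
  set j := ⌈(s - s0) / p⌉ with hj
  set D := s0 + j * p - s with hD
  have hj1 : (s - s0) / p ≤ j := Int.le_ceil _
  have hj2 : (j : ℝ) < (s - s0) / p + 1 := Int.ceil_lt_add_one _
  rw [div_le_iff₀ hp] at hj1
  have hj3 : (j : ℝ) * p < s - s0 + p := by
    have := mul_lt_mul_of_pos_right hj2 hp
    rwa [add_mul, div_mul_cancel₀ _ hp.ne', one_mul] at this
  have hD0 : 0 ≤ D := by linarith
  have hDp : D ≤ p := by linarith
  set t := ⌈D / θ⌉ with ht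
  have ht0 : 0 ≤ t := Int.ceil_nonneg (by positivity)
  have htT : t ≤ ⌈p / θ⌉ := Int.ceil_le_ceil (by gcongr)
  have ht1 : D / θ ≤ t := Int.le_ceil _
  have ht2 : (t : ℝ) < D / θ + 1 := Int.ceil_lt_add_one _
  rw [div_le_iff₀ h0] at ht1
  have ht3 : (t : ℝ) * θ < D + θ := by
    have := mul_lt_mul_of_pos_right ht2 h0
    rwa [add_mul, div_mul_cancel₀ _ h0.ne', one_mul] at this
  have e : (t : ℝ) * θ = t * m * α + t * l * p := by rw [hθ]; ring
  refine ⟨m * t, j - t * l, ?_, ?_, ?_⟩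
  · rw [abs_mul, abs_of_nonneg ht0]
    exact mul_le_mul_of_nonneg_left htT (abs_nonneg _)
  · push_cast; nlinarith
  · push_cast; nlinarith

lemma exists_small (p : ℕ) (hp : 0 < p) (ε : ℝ) (hε : 0 < ε) :
    ∃ m l : ℤ, 0 < m * α + l * (p : ℝ) ∧ m * α + l * (p : ℝ) < ε := by
  have hirr : Irrational (α / (p : ℝ)) := α_irr.div_natCast hp.ne'
  have hd := (dense_addSubgroupClosure_pair_iff (a := α) (b := (p : ℝ))).2 hirr
  obtain ⟨z, hz, hz2⟩ := hd.exists_between hε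
  rw [SetLike.mem_coe, AddSubgroup.mem_closure_pair] at hz
  obtain ⟨m, l, rfl⟩ := hz
  refine ⟨m, l, ?_, ?_⟩
  · simpa using hz2.1
  · simpa using hz2.2

lemma floor_right (s : ℝ) (n : ℕ) : ∃ ε : ℝ, 0 < ε ∧ ∀ δ : ℝ, 0 ≤ δ → δ < ε → ∀ k : ℕ, k < n →
    ⌊s + δ + k * α⌋ = ⌊s + k * α⌋ := by
  induction n with
  | zero => exact ⟨1, one_pos, by simp⟩
  | succ n ih =>
    obtain ⟨ε, h0, h⟩ := ih
    have hn := Int.lt_floor_add_one (s + n * α)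
    have hn' := Int.floor_le (s + n * α)
    refine ⟨min ε (⌊s + n * α⌋ + 1 - (s + n * α)), lt_min h0 (by linarith), ?_⟩
    intro δ hδ hδ2 k hk
    rw [lt_min_iff] at hδ2
    rcases Nat.lt_succ_iff_lt_or_eq.mp hk with hk | rfl
    · exact h δ hδ hδ2.1 k hk
    · rw [Int.floor_eq_iff]
      constructor <;> linarith

lemma exists_period (s : ℝ) (n : ℕ) : ∃ K : ℕ, ∀ k : ℕ, k < n → stage ⌊s + k * α⌋ < K := by
  refine ⟨(Finset.range n).sup (fun k => stage ⌊s + k * α⌋) + 1, fun k hk => ?_⟩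
  exact Nat.lt_succ_of_le
    (Finset.le_sup (f := fun k : ℕ => stage ⌊s + k * α⌋) (Finset.mem_range.2 hk))

lemma recur (s0 : ℝ) (n : ℕ) : ∃ R : ℕ, ∀ s : ℝ, ∃ i : ℤ, |i| ≤ R ∧
    ∀ k : ℕ, k < n → y ⌊s + i * α + k * α⌋ = y ⌊s0 + k * α⌋ := by
  obtain ⟨ε, hε, hfl⟩ := floor_right s0 n
  obtain ⟨K, hK⟩ := exists_period s0 n
  obtain ⟨m, l, h0, h1⟩ := exists_small (P K) (P_pos K) ε hε
  have hp : (0 : ℝ) < P K := by exact_mod_cast P_pos K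
  refine ⟨(|m| * (⌈(P K : ℝ) / (m * α + l * (P K : ℝ))⌉)).toNat, fun s => ?_⟩
  obtain ⟨i, j, hi, hj1, hj2⟩ := exists_hit s s0 (P K) ε m l hp h0 h1
  refine ⟨i, hi.trans (Int.self_le_toNat _), fun k hk => ?_⟩
  have h := hfl (s + i * α - s0 - j * P K) (by linarith) (by linarith) k hk
  have e : s + i * α + k * α
      = s0 + (s + i * α - s0 - j * P K) + k * α + ((j * (P K : ℤ) : ℤ) : ℝ) := by
    push_cast; ring
  rw [e, Int.floor_add_intCast, h, y_add (hK k hk)]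

lemma isClosed_X : IsClosed X := by
  have : X = ⋂ (a : ℤ), ⋂ (n : ℕ), (fun (x : ℤ → Bool) (k : Fin n) => x (a + (k : ℕ))) ⁻¹' (Set.range (wd n)) := by
    ext x
    simp only [X, Set.mem_ofPred_eq, Set.mem_iInter, Set.mem_preimage, Set.mem_range]
    refine forall_congr' fun a => forall_congr' fun n => exists_congr fun s => ?_
    constructor
    · intro h; funext k; exact (h k k.2).symm
    · intro h k hk; exact (congrFun h ⟨k, hk⟩).symm
  rw [this]
  refine isClosed_iInter fun a => isClosed_iInter fun n => ?_
  exact (Set.toFinite (Set.range (wd n))).isClosed.preimage (by fun_prop)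

lemma image_X : shiftMap '' X = X := by
  ext x
  constructor
  · rintro ⟨z, hz, rfl⟩ a n
    obtain ⟨s, hs⟩ := hz (a + 1) n
    refine ⟨s, fun k hk => ?_⟩
    rw [← hs k hk]
    simp only [shiftMap]
    congr 1; ring
  · intro hx
    refine ⟨fun j => x (j - 1), ?_, ?_⟩
    · intro a n
      obtain ⟨s, hs⟩ := hx (a - 1) n
      refine ⟨s, fun k hk => ?_⟩
      rw [← hs k hk]
      ring_nf
    · funext j; simp [shiftMap]

lemma shift_mem {Y : Set (ℤ → Bool)} (hY : shiftMap '' Y = Y) {x : ℤ → Bool} (hx : x ∈ Y) (i : ℤ) :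
    (fun j => x (j + i)) ∈ Y := by
  have up : ∀ z ∈ Y, (fun j => z (j + 1)) ∈ Y := fun z hz => by
    rw [← hY]; exact ⟨z, hz, rfl⟩
  have down : ∀ z ∈ Y, (fun j => z (j - 1)) ∈ Y := fun z hz => by
    rw [← hY] at hz
    obtain ⟨w, hw, rfl⟩ := hz
    convert hw using 1
    funext j; simp [shiftMap]
  induction i using Int.induction_on with
  | zero => simpa using hx
  | succ i ih =>
    convert up _ ih using 2
    congr 1; ring
  | pred i ih =>
    convert down _ ih using 2
    congr 1; ring

lemma minimal_X : IsMinimalSubshift X := by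
  refine ⟨⟨⟨pt 0, pt_mem 0⟩, isClosed_X, image_X⟩, ?_⟩
  intro Y hYX hYc hY hYne
  refine Set.Subset.antisymm hYX fun z hz => ?_
  obtain ⟨x, hx⟩ := hYne
  have key : ∀ N : ℕ, ∃ w ∈ Y, ∀ j : ℤ, |j| ≤ N → w j = z j := by
    intro N
    obtain ⟨s0, hs0⟩ := hz (-N) (2 * N + 1)
    obtain ⟨R, hR⟩ := recur s0 (2 * N + 1)
    obtain ⟨s, hs⟩ := hYX hx (-R) (2 * R + 2 * N + 1)
    obtain ⟨i, hi, hik⟩ := hR (s + R * α)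
    refine ⟨fun j => x (j + (i + N)), shift_mem hY hx _, fun j hj => ?_⟩
    rw [abs_le] at hj hi
    have h1 := hs0 (j + N).toNat (by omega)
    have h2 := hik (j + N).toNat (by omega)
    have h3 := hs (j + N + i + R).toNat (by omega)
    have e1 : ((j + N).toNat : ℤ) = j + N := Int.toNat_of_nonneg (by omega)
    have e3 : ((j + N + i + R).toNat : ℤ) = j + N + i + R := Int.toNat_of_nonneg (by omega)
    have e1' : ((j + N).toNat : ℝ) = j + N := by exact_mod_cast congrArg (Int.cast : ℤ → ℝ) e1
    have e3' : ((j + N + i + R).toNat : ℝ) = j + N + i + R := by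
      exact_mod_cast congrArg (Int.cast : ℤ → ℝ) e3
    rw [e1, e1'] at h1
    rw [e1'] at h2
    rw [e3, e3'] at h3
    have g1 : (-(N : ℤ) + (j + N)) = j := by ring
    have g3 : (-(R : ℤ) + (j + N + i + R)) = j + (i + N) := by ring
    rw [g1] at h1
    rw [g3] at h3
    change x (j + (i + N)) = z j
    rw [h1, ← h2, h3]
    congr 2; ring
  choose w hwY hw using key
  refine hYc.mem_of_tendsto (b := Filter.atTop) (f := w) ?_ (Filter.Eventually.of_forall hwY)
  rw [tendsto_pi_nhds]
  intro j
  apply tendsto_const_nhds.congr'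
  filter_upwards [Filter.eventually_ge_atTop j.natAbs] with N hN
  exact (hw N j (by rw [abs_le]; omega)).symm

/-- one-bit step -/
def Step (n : ℕ) (a b : Fin n → Bool) : Prop := a ∈ Lang X n ∧ b ∈ Lang X n ∧ hammingDist a b = 1

lemma step_symm (n : ℕ) : Std.Symm (Step n) := by
  refine ⟨?_⟩
  rintro a b ⟨h1, h2, h3⟩
  exact ⟨h2, h1, by rw [hammingDist_comm]; exact h3⟩

lemma wd_mem (n : ℕ) (s : ℝ) : wd n s ∈ Lang X n := by rw [lang_eq]; exact ⟨s, rfl⟩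

lemma hamming_le_one {n : ℕ} (a b : Fin n → Bool) (k : Fin n) (h : ∀ j, j ≠ k → a j = b j) :
    hammingDist a b ≤ 1 := by
  unfold hammingDist
  rw [Finset.card_le_one]
  intro i hi j hj
  simp only [Finset.mem_filter, Finset.mem_univ, true_and] at hi hj
  have h1 : i = k := by by_contra hc; exact hi (h i hc)
  have h2 : j = k := by by_contra hc; exact hj (h j hc)
  rw [h1, h2]

/-- total floor -/
noncomputable def tot (n : ℕ) (s : ℝ) : ℤ := ∑ k : Fin n, ⌊s + (k : ℕ) * α⌋

lemma path (n : ℕ) (N : ℕ) : ∀ s s' : ℝ, s ≤ s' → tot n s' - tot n s ≤ N →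
    Relation.ReflTransGen (Step n) (wd n s) (wd n s') := by
  induction N with
  | zero =>
    intro s s' hs hN
    have hmono : ∀ k ∈ (Finset.univ : Finset (Fin n)), ⌊s + (k : ℕ) * α⌋ ≤ ⌊s' + (k : ℕ) * α⌋ :=
      fun k _ => Int.floor_le_floor (by linarith)
    have hsum : tot n s = tot n s' := le_antisymm (Finset.sum_le_sum hmono) (by simpa using hN)
    have := (Finset.sum_eq_sum_iff_of_le hmono).1 hsum
    have : wd n s = wd n s' := by
      funext k; simp only [wd]; rw [this k (Finset.mem_univ _)]
    rw [this]
  | succ N ih =>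
    intro s s' hs hN
    by_cases hall : ∀ k : Fin n, ⌊s + (k : ℕ) * α⌋ = ⌊s' + (k : ℕ) * α⌋
    · have : wd n s = wd n s' := by
        funext k; simp only [wd]; rw [hall k]
      rw [this]
    push Not at hall
    obtain ⟨k1, hk1⟩ := hall
    obtain ⟨k0, -, hk0⟩ := Finset.exists_min_image (Finset.univ : Finset (Fin n))
      (fun k => (⌊s + (k : ℕ) * α⌋ : ℝ) + 1 - (k : ℕ) * α) ⟨k1, Finset.mem_univ _⟩
    set s1 : ℝ := (⌊s + (k0 : ℕ) * α⌋ : ℝ) + 1 - (k0 : ℕ) * α with hs1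
    have hss1 : s < s1 := by
      have := Int.lt_floor_add_one (s + (k0 : ℕ) * α)
      linarith
    have hfl0 : ⌊s1 + (k0 : ℕ) * α⌋ = ⌊s + (k0 : ℕ) * α⌋ + 1 := by
      rw [Int.floor_eq_iff]; push_cast; constructor <;> linarith
    have hfl : ∀ k : Fin n, k ≠ k0 → ⌊s1 + (k : ℕ) * α⌋ = ⌊s + (k : ℕ) * α⌋ := by
      intro k hk
      have hle := hk0 k (Finset.mem_univ _)
      have hne : s1 ≠ (⌊s + (k : ℕ) * α⌋ : ℝ) + 1 - (k : ℕ) * α := by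
        intro heq
        have hkk : (((k : ℕ) : ℤ) - ((k0 : ℕ) : ℤ)) ≠ 0 := by
          intro h; apply hk; apply Fin.ext; omega
        have hirr := α_irr.intCast_mul hkk
        apply hirr
        refine ⟨((⌊s + (k : ℕ) * α⌋ - ⌊s + (k0 : ℕ) * α⌋ : ℤ) : ℚ), ?_⟩
        push_cast
        linarith
      have hlt := lt_of_le_of_ne hle hne
      have := Int.floor_le (s + (k : ℕ) * α)
      rw [Int.floor_eq_iff]; constructor <;> linarith
    have hs1s' : s1 ≤ s' := by
      have hle := hk0 k1 (Finset.mem_univ _)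
      have h1 : ⌊s + (k1 : ℕ) * α⌋ + 1 ≤ ⌊s' + (k1 : ℕ) * α⌋ := by
        have : ⌊s + (k1 : ℕ) * α⌋ ≤ ⌊s' + (k1 : ℕ) * α⌋ := Int.floor_le_floor (by linarith)
        omega
      have h2 := Int.floor_le (s' + (k1 : ℕ) * α)
      have h3 : (⌊s + (k1 : ℕ) * α⌋ : ℝ) + 1 ≤ ⌊s' + (k1 : ℕ) * α⌋ := by exact_mod_cast h1
      linarith
    have htot : tot n s + 1 ≤ tot n s1 := by
      have : tot n s < tot n s1 := by
        apply Finset.sum_lt_sum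
        · intro k _; exact Int.floor_le_floor (by linarith)
        · exact ⟨k0, Finset.mem_univ _, by omega⟩
      omega
    have hrest := ih s1 s' hs1s' (by push_cast at hN; omega)
    refine Relation.ReflTransGen.trans ?_ hrest
    by_cases hw : wd n s = wd n s1
    · rw [hw]
    · apply Relation.ReflTransGen.single
      refine ⟨wd_mem _ _, wd_mem _ _, le_antisymm ?_ ?_⟩
      · apply hamming_le_one _ _ k0
        intro j hj; simp only [wd]; rw [hfl j hj]
      · exact Nat.succ_le_of_lt (hammingDist_pos.2 hw)

lemma connected_X : LanguageConnected X := by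
  intro n _ u hu v hv
  rw [lang_eq] at hu hv
  obtain ⟨s, rfl⟩ := hu
  obtain ⟨t, rfl⟩ := hv
  change Relation.ReflTransGen (Step n) _ _
  rcases le_total s t with h | h
  · exact path n _ s t h (Int.self_le_toNat _)
  · have := step_symm n
    exact (Relation.ReflTransGen.stdSymm (r := Step n)).symm _ _ (path n _ t s h (Int.self_le_toNat _))

lemma count (k : ℕ) : 2 ^ (H k).card ≤ (Lang X (2 * P k)).ncard := by
  classical
  rw [← Finset.card_powerset, ← Set.ncard_coe_finset]
  let F : Finset ℕ → (Fin (P k) → Bool) := fun S r => decide ((r : ℕ) ∈ S)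
  let M : Finset ℕ → ℤ := fun S => ((Nat.ofBits (F S) : ℤ) - 1) * P k
  refine Set.ncard_le_ncard_of_injOn (fun S => wd (2 * P k) (M S : ℝ)) (fun S _ => wd_mem _ _) ?_
    (Set.toFinite _)
  have main : ∀ S T : Finset ℕ, S ⊆ H k → wd (2 * P k) (M S : ℝ) = wd (2 * P k) (M T : ℝ) →
      S ⊆ T := by
    intro S T hS heq r hr
    have hrH := hS hr
    have hrk := (mem_H.1 hrH).1
    have hα := α_gt
    have hα0 : 0 < α := by linarith
    set j := ⌈(r : ℝ) / α⌉₊ with hj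
    have hj1 : (r : ℝ) ≤ j * α := by
      rw [← div_le_iff₀ hα0]; exact Nat.le_ceil _
    have hj2 : (j : ℝ) * α < r + 1 := by
      have := Nat.ceil_lt_add_one (a := (r : ℝ) / α) (by positivity)
      have := mul_lt_mul_of_pos_right this hα0
      rw [add_mul, div_mul_cancel₀ _ hα0.ne', one_mul] at this
      have := α_lt
      linarith
    have hjP : j < 2 * P k := by
      have h1 : (j : ℝ) < 2 * (r + 1) := by nlinarith [(Nat.cast_nonneg j : (0 : ℝ) ≤ j)]
      have h2 : j < 2 * (r + 1) := by exact_mod_cast h1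
      omega
    have hfl : ∀ U : Finset ℕ, ⌊(M U : ℝ) + j * α⌋ = M U + r := by
      intro U
      rw [Int.floor_intCast_add]
      congr 1
      rw [Int.floor_eq_iff]; push_cast; exact ⟨hj1, hj2⟩
    have h := congrFun heq ⟨j, hjP⟩
    simp only [wd] at h
    rw [hfl, hfl] at h
    simp only [M] at h
    rw [y_hole k _ r hrH hrk, y_hole k _ r hrH hrk] at h
    simpa [F, hr] using h
  intro S hS T hT heq
  simp only [Finset.coe_powerset, Set.mem_preimage, Set.mem_powerset_iff, Finset.coe_subset] at hS hT
  exact Finset.Subset.antisymm (main S T hS heq) (main T S hT heq.symm)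

lemma lang_pos (n : ℕ) : 0 < (Lang X n).ncard :=
  (Set.ncard_pos (Set.toFinite _)).2 ⟨_, wd_mem n 0⟩

lemma subadd : Subadditive (fun n : ℕ => Real.log ((Lang X n).ncard)) := by
  intro m n
  have h : (Lang X (m + n)).ncard ≤ (Lang X m).ncard * (Lang X n).ncard := by
    rw [← Set.ncard_prod]
    refine Set.ncard_le_ncard_of_injOn
      (fun w => (fun i => w (Fin.castAdd n i), fun i => w (Fin.natAdd m i))) ?_ ?_ (Set.toFinite _)
    · intro w hw
      rw [lang_eq] at hw
      obtain ⟨s, rfl⟩ := hw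
      refine ⟨?_, ?_⟩
      · exact wd_mem m s
      · convert wd_mem n (s + m * α) using 1
        funext i
        simp only [wd, Fin.val_natAdd]
        congr 2; push_cast; ring
    · intro w _ w' _ heq
      simp only [Prod.mk.injEq] at heq
      funext i
      induction i using Fin.addCases with
      | left i => exact congrFun heq.1 i
      | right i => exact congrFun heq.2 i
  have hm : ((Lang X m).ncard : ℝ) ≠ 0 := by exact_mod_cast (lang_pos m).ne'
  have hn : ((Lang X n).ncard : ℝ) ≠ 0 := by exact_mod_cast (lang_pos n).ne'
  rw [← Real.log_mul hm hn]
  apply Real.log_le_log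
  · exact_mod_cast lang_pos (m + n)
  · exact_mod_cast h

lemma entropy : ∃ h : ℝ, 0 < h ∧
    Filter.Tendsto (fun n : ℕ => Real.log ((Lang X n).ncard) / (n : ℝ)) Filter.atTop (nhds h) := by
  have hb : BddBelow (Set.range fun n : ℕ => Real.log ((Lang X n).ncard) / (n : ℝ)) := by
    refine ⟨0, ?_⟩
    rintro _ ⟨n, rfl⟩
    exact div_nonneg (Real.log_natCast_nonneg _) (Nat.cast_nonneg _)
  have ht := subadd.tendsto_lim hb
  refine ⟨_, ?_, ht⟩
  have hsub : Filter.Tendsto (fun k : ℕ => 2 * P k) Filter.atTop Filter.atTop :=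
    Filter.tendsto_atTop_mono (fun k => by have := P_gt k; simp only [id]; omega) Filter.tendsto_id
  have hpos : 0 < Real.log 2 / 4 := div_pos (Real.log_pos (by norm_num)) (by norm_num)
  refine hpos.trans_le (ge_of_tendsto (ht.comp hsub) (Filter.Eventually.of_forall fun k => ?_))
  simp only [Function.comp]
  have hP : (0 : ℝ) < P k := by exact_mod_cast P_pos k
  have h1 : Real.log ((2 : ℝ) ^ (H k).card) ≤ Real.log ((Lang X (2 * P k)).ncard) :=
    Real.log_le_log (by positivity) (by exact_mod_cast count k)
  rw [Real.log_pow] at h1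
  have h2 := card_H k
  have h3 : (0 : ℝ) ≤ P k * (1 / 2) ^ (k + 1) := by positivity
  have hl : 0 < Real.log 2 := Real.log_pos (by norm_num)
  push_cast
  rw [le_div_iff₀ (by positivity)]
  nlinarith

lemma infinite_X : X.Infinite := by
  intro hfin
  obtain ⟨h, h0, ht⟩ := entropy
  have hle : ∀ n, (Lang X n).ncard ≤ X.ncard := by
    intro n
    have : Lang X n = (fun (x : ℤ → Bool) (k : Fin n) => x ((k : ℕ) : ℤ)) '' X := by
      ext w
      constructor
      · rintro ⟨x, hx, hw⟩; exact ⟨x, hx, (funext hw).symm⟩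
      · rintro ⟨x, hx, rfl⟩; exact ⟨x, hx, fun k => rfl⟩
    rw [this]
    exact Set.ncard_image_le hfin
  have h2 : Filter.Tendsto (fun n : ℕ => Real.log (X.ncard) / (n : ℝ)) Filter.atTop (nhds 0) :=
    tendsto_const_div_atTop_nhds_zero_nat _
  have := le_of_tendsto_of_tendsto' ht h2 (fun n => by
    apply div_le_div_of_nonneg_right _ (Nat.cast_nonneg n)
    apply Real.log_le_log
    · exact_mod_cast lang_pos n
    · exact_mod_cast hle n)
  linarith

end LCPE

theorem exists_minimal_language_connected_positive_entropy :
    ∃ X : Set (ℤ → Bool), IsMinimalSubshift X ∧ X.Infinite ∧ LanguageConnected X ∧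
      ∃ h : ℝ, 0 < h ∧
        Filter.Tendsto (fun n : ℕ => Real.log ((Lang X n).ncard) / (n : ℝ))
          Filter.atTop (nhds h) :=
  ⟨LCPE.X, LCPE.minimal_X, LCPE.infinite_X, LCPE.connected_X, LCPE.entropy⟩
end

section
/- There exists an infinite minimal language-connected subshift X over {0,1} such that the topological entropy of the shift map σ restricted to X is zero. -/
/-! ### Coding of an irrational rotation -/

/-- Coding function of the circle: indicator of `[0, 1/3)` mod 1. -/
noncomputable def cf (t : ℝ) : Bool := decide (Int.fract t < 1 / 3)

/-- The point coding the orbit of `t` under rotation by `√2`. -/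
noncomputable def pt (t : ℝ) : ℤ → Bool := fun n => cf (t + n * √2)

/-- The set of all codings. -/
def orb : Set (ℤ → Bool) := Set.range pt

lemma cf_add_int (t : ℝ) (m : ℤ) : cf (t + m) = cf t := by
  simp [cf]

lemma cf_right (t : ℝ) : ∃ e > t, ∀ u, t ≤ u → u < e → cf u = cf t := by
  have h1 := Int.floor_le t
  have h2 := Int.lt_floor_add_one t
  by_cases h : Int.fract t < 1 / 3
  · refine ⟨⌊t⌋ + 1 / 3, by unfold Int.fract at h; linarith, fun u hu hu' => ?_⟩
    have hf : ⌊u⌋ = ⌊t⌋ := by rw [Int.floor_eq_iff]; constructor <;> linarith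
    have : Int.fract u < 1 / 3 := by unfold Int.fract; rw [hf]; linarith
    simp only [cf, h, this]
  · refine ⟨⌊t⌋ + 1, h2, fun u hu hu' => ?_⟩
    have hf : ⌊u⌋ = ⌊t⌋ := by rw [Int.floor_eq_iff]; constructor <;> linarith
    have : ¬ Int.fract u < 1 / 3 := by
      unfold Int.fract at *; rw [hf]; linarith
    simp only [cf, h, this]

lemma cf_loc (t : ℝ) (h0 : Int.fract t ≠ 0) (h1 : Int.fract t ≠ 1 / 3) :
    ∀ᶠ u in nhds t, cf u = cf t := by
  have h2 := Int.lt_floor_add_one t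
  have h3 : (⌊t⌋ : ℝ) < t := by
    rcases (Int.floor_le t).lt_or_eq with h | h
    · exact h
    · exact absurd (by unfold Int.fract; linarith) h0
  have key : ∀ u, (⌊t⌋ : ℝ) < u → u < ⌊t⌋ + 1 → ⌊u⌋ = ⌊t⌋ := by
    intro u hu hu'
    rw [Int.floor_eq_iff]; constructor <;> linarith
  rcases lt_or_gt_of_ne h1 with h | h
  · have h4 : t < ⌊t⌋ + 1 / 3 := by unfold Int.fract at h; linarith
    filter_upwards [Ioo_mem_nhds h3 h4] with u hu
    have hf := key u hu.1 (by linarith [hu.2])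
    have : Int.fract u < 1 / 3 := by unfold Int.fract; rw [hf]; linarith [hu.2]
    simp only [cf, h, this]
  · have h4 : (⌊t⌋ : ℝ) + 1 / 3 < t := by unfold Int.fract at h; linarith
    filter_upwards [Ioo_mem_nhds h4 h2] with u hu
    have hf := key u (by linarith [hu.1]) hu.2
    have : ¬ Int.fract u < 1 / 3 := by unfold Int.fract; rw [hf]; linarith [hu.1]
    simp only [cf, not_lt.2 h.le, this]

lemma indep (a b : ℤ) (h : (a : ℝ) + b * √2 = 0) : a = 0 ∧ b = 0 := by
  have hb : b = 0 := by
    by_contra hb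
    have h1 : Irrational (a + b * √2) := (irrational_sqrt_two.intCast_mul hb).intCast_add a
    exact h1 ⟨0, by simp [h]⟩
  subst hb
  simpa using h

/-- Singular parameters: at most one index hits a discontinuity. -/
lemma sing_unique (t : ℝ) (j k : ℤ)
    (hj : Int.fract (t + j * √2) = 0 ∨ Int.fract (t + j * √2) = 1 / 3)
    (hk : Int.fract (t + k * √2) = 0 ∨ Int.fract (t + k * √2) = 1 / 3) : j = k := by
  have : ∃ c : ℤ, (c : ℝ) + (3 * (j - k) : ℤ) * √2 = 0 := by
    unfold Int.fract at hj hk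
    generalize ⌊t + j * √2⌋ = p at *
    generalize ⌊t + k * √2⌋ = q at *
    rcases hj with hj | hj <;> rcases hk with hk | hk
    · exact ⟨3 * (q - p), by push_cast; linarith⟩
    · exact ⟨3 * (q - p) + 1, by push_cast; linarith⟩
    · exact ⟨3 * (q - p) - 1, by push_cast; linarith⟩
    · exact ⟨3 * (q - p), by push_cast; linarith⟩
  obtain ⟨c, hc⟩ := this
  have := (indep _ _ hc).2
  omega

/-- The word of length `n` at `t`. -/
noncomputable def wd (n : ℕ) (t : ℝ) : Fin n → Bool := fun k => pt t ((k : ℕ) : ℤ)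

lemma wd_loc (n : ℕ) (t : ℝ) : ∀ᶠ u in nhds t, hammingDist (wd n t) (wd n u) ≤ 1 := by
  have h : ∀ k : Fin n, ∀ᶠ u in nhds t,
      (¬ (Int.fract (t + (((k : ℕ) : ℤ) : ℝ) * √2) = 0 ∨
        Int.fract (t + (((k : ℕ) : ℤ) : ℝ) * √2) = 1 / 3)) → wd n u k = wd n t k := by
    intro k
    by_cases hk : (Int.fract (t + (((k : ℕ) : ℤ) : ℝ) * √2) = 0 ∨
        Int.fract (t + (((k : ℕ) : ℤ) : ℝ) * √2) = 1 / 3)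
    · exact Filter.Eventually.of_forall fun u hu => absurd hk hu
    · push Not at hk
      have h1 := cf_loc _ hk.1 hk.2
      have hc : Filter.Tendsto (fun u : ℝ => u + (((k : ℕ) : ℤ) : ℝ) * √2) (nhds t)
          (nhds (t + (((k : ℕ) : ℤ) : ℝ) * √2)) :=
        (continuous_id.add continuous_const).tendsto t
      filter_upwards [hc.eventually h1] with u hu _
      exact hu
  filter_upwards [Filter.eventually_all.2 h] with u hu
  unfold hammingDist
  rw [Finset.card_le_one]
  intro a ha b hb
  simp only [Finset.mem_filter, Finset.mem_univ, true_and] at ha hb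
  have ha' := not_imp_comm.1 (hu a) (fun h => ha h.symm)
  have hb' := not_imp_comm.1 (hu b) (fun h => hb h.symm)
  have := sing_unique t _ _ ha' hb'
  ext; omega

lemma lang_eq (n : ℕ) : Lang (closure orb) n = Set.range (wd n) := by
  ext w
  constructor
  · rintro ⟨x, hx, hw⟩
    have ho : IsOpen {y : ℤ → Bool | ∀ k : Fin n, y ((k : ℕ) : ℤ) = w k} := by
      rw [Set.ofPred_forall]
      refine isOpen_iInter_of_finite fun k => ?_
      have h : IsOpen ((fun y : ℤ → Bool => y ((k : ℕ) : ℤ)) ⁻¹' {w k}) :=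
        (isOpen_discrete _).preimage (continuous_apply _)
      convert h using 1
      ext y
      simp
    obtain ⟨y, hy, ⟨t, rfl⟩⟩ := mem_closure_iff.1 hx _ ho (fun k => (hw k).symm)
    exact ⟨t, funext fun k => hy k⟩
  · rintro ⟨t, rfl⟩
    exact ⟨pt t, subset_closure ⟨t, rfl⟩, fun k => rfl⟩

lemma connected_lang : LanguageConnected (closure orb) := by
  intro n _ 
  rw [lang_eq]
  rintro _ ⟨s, rfl⟩ _ ⟨t, rfl⟩
  set R : (Fin n → Bool) → (Fin n → Bool) → Prop :=
    fun a b => a ∈ Set.range (wd n) ∧ b ∈ Set.range (wd n) ∧ hammingDist a b = 1 with hR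
  have hl : IsLocallyConstant (fun t : ℝ => Relation.ReflTransGen R (wd n s) (wd n t)) := by
    rw [IsLocallyConstant.iff_eventually_eq]
    intro t
    filter_upwards [wd_loc n t] with u hu
    rcases Nat.le_one_iff_eq_zero_or_eq_one.1 hu with h | h
    · rw [hammingDist_eq_zero] at h
      simp only [h]
    · apply propext
      constructor
      · intro h'
        exact h'.tail ⟨⟨u, rfl⟩, ⟨t, rfl⟩, by rw [hammingDist_comm]; exact h⟩
      · intro h'
        exact h'.tail ⟨⟨t, rfl⟩, ⟨u, rfl⟩, h⟩
  have := hl.apply_eq_of_isPreconnected isPreconnected_univ (Set.mem_univ s) (Set.mem_univ t)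
  exact cast this Relation.ReflTransGen.refl

/-! ### Subshift -/

/-- The shift as a homeomorphism. -/
def shiftHomeo : (ℤ → Bool) ≃ₜ (ℤ → Bool) where
  toFun := shiftMap
  invFun := fun x n => x (n - 1)
  left_inv := fun x => by funext n; simp [shiftMap]
  right_inv := fun x => by funext n; simp [shiftMap]
  continuous_toFun := continuous_pi fun n => continuous_apply (n + 1)
  continuous_invFun := continuous_pi fun n => continuous_apply (n - 1)

lemma shift_pt (t : ℝ) : shiftMap (pt t) = pt (t + √2) := by
  funext n
  simp only [shiftMap, pt]
  congr 1
  push_cast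
  ring

lemma shift_orb : shiftMap '' orb = orb := by
  ext x
  constructor
  · rintro ⟨_, ⟨t, rfl⟩, rfl⟩
    exact ⟨_, (shift_pt t).symm⟩
  · rintro ⟨t, rfl⟩
    exact ⟨_, ⟨t - √2, rfl⟩, by rw [shift_pt]; simp⟩

lemma subshift_orb : IsSubshift (closure orb) := by
  refine ⟨⟨pt 0, subset_closure ⟨0, rfl⟩⟩, isClosed_closure, ?_⟩
  have h := shiftHomeo.image_closure orb
  have h2 : (shiftHomeo '' orb) = orb := shift_orb
  rw [h2] at h
  exact h

lemma shift_int {Y : Set (ℤ → Bool)} (hY : shiftMap '' Y = Y) (k : ℤ) :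
    ∀ y ∈ Y, (fun n => y (n + k)) ∈ Y := by
  induction k using Int.induction_on with
  | zero => intro y hy; simpa using hy
  | succ i ih =>
    intro y hy
    have h : shiftMap (fun n => y (n + i)) ∈ Y := by
      rw [← hY]; exact ⟨_, ih y hy, rfl⟩
    convert h using 1
    funext n
    simp only [shiftMap]
    congr 1
    ring
  | pred i ih =>
    intro y hy
    have h := ih y hy
    rw [← hY] at h
    obtain ⟨z, hz, hzy⟩ := h
    convert hz using 1
    funext n
    have := congrFun hzy (n - 1)
    simp only [shiftMap, sub_add_cancel] at this
    rw [this]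
    congr 1
    ring

lemma dense_hit (a b : ℝ) (hab : a < b) (t : ℝ) :
    ∃ p : ℤ × ℤ, t + p.1 * √2 + p.2 ∈ Set.Ioo a b := by
  have hd : Dense (AddSubgroup.closure {1, √2} : Set ℝ) := by
    rw [dense_addSubgroupClosure_pair_iff]
    simpa using irrational_sqrt_two.inv
  obtain ⟨x, hx, hx'⟩ := hd.exists_between (sub_lt_sub_right hab t)
  rw [SetLike.mem_coe, AddSubgroup.mem_closure_pair] at hx
  obtain ⟨m, k, rfl⟩ := hx
  refine ⟨(k, m), ?_⟩
  simp only [zsmul_eq_mul, Set.mem_Ioo] at *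
  constructor <;> linarith [hx'.1, hx'.2]

lemma unif_hit (a b : ℝ) (hab : a < b) :
    ∃ F : Finset (ℤ × ℤ), ∀ t : ℝ, ∃ p ∈ F, ∃ m : ℤ, t + p.1 * √2 + m ∈ Set.Ioo a b := by
  obtain ⟨F, hF⟩ := (isCompact_Icc (a := (0 : ℝ)) (b := 1)).elim_finite_subcover
    (fun p : ℤ × ℤ => {t : ℝ | t + p.1 * √2 + p.2 ∈ Set.Ioo a b})
    (fun p => isOpen_Ioo.preimage (by fun_prop))
    (fun t _ => Set.mem_iUnion.2 (dense_hit a b hab t))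
  refine ⟨F, fun t => ?_⟩
  have h := hF (⟨Int.fract_nonneg t, (Int.fract_lt_one t).le⟩ : Int.fract t ∈ Set.Icc (0 : ℝ) 1)
  simp only [Set.mem_iUnion] at h
  obtain ⟨p, hp, h⟩ := h
  refine ⟨p, hp, p.2 - ⌊t⌋, ?_⟩
  simp only [Set.mem_ofPred_eq] at h
  convert h using 1
  unfold Int.fract
  push_cast
  ring

lemma right_word (s : ℝ) (J : Finset ℤ) :
    ∃ e > s, ∀ u, s ≤ u → u < e → ∀ j ∈ J, pt u j = pt s j := by
  induction J using Finset.induction_on with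
  | empty => exact ⟨s + 1, by linarith, by simp⟩
  | insert j J _ ih =>
    obtain ⟨e, he, h⟩ := ih
    obtain ⟨d, hd, h'⟩ := cf_right (s + j * √2)
    refine ⟨min e (d - j * √2), lt_min he (by linarith), fun u hu hu' i hi => ?_⟩
    rw [lt_min_iff] at hu'
    rcases Finset.mem_insert.1 hi with rfl | hi
    · exact h' _ (by linarith) (by linarith [hu'.2])
    · exact h u hu hu'.1 i hi

lemma minimal_orb : IsMinimalSubshift (closure orb) := by
  refine ⟨subshift_orb, fun Y hYX hYc hYs ⟨y, hy⟩ => subset_antisymm hYX ?_⟩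
  refine closure_minimal ?_ hYc
  rintro _ ⟨s, rfl⟩
  rw [← hYc.closure_eq, mem_closure_iff]
  intro o ho hso
  obtain ⟨J, u, hu, hJ⟩ := isOpen_pi_iff.1 ho _ hso
  obtain ⟨e, he, hw⟩ := right_word s J
  obtain ⟨F, hF⟩ := unif_hit s e he
  have hcl : IsClosed (⋃ p ∈ F, {z : ℤ → Bool | ∀ j ∈ J, z (j + p.1) = pt s j}) := by
    refine F.finite_toSet.isClosed_biUnion fun p _ => ?_
    simp only [Set.ofPred_forall]
    exact isClosed_biInter fun j _ =>
      isClosed_eq (continuous_apply (j + p.1)) continuous_const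
  have hsub : closure orb ⊆ ⋃ p ∈ F, {z : ℤ → Bool | ∀ j ∈ J, z (j + p.1) = pt s j} := by
    refine closure_minimal ?_ hcl
    rintro _ ⟨t, rfl⟩
    obtain ⟨p, hp, m, hm⟩ := hF t
    refine Set.mem_biUnion hp fun j hj => ?_
    rw [← hw _ hm.1.le hm.2 j hj]
    simp only [pt]
    rw [← cf_add_int _ m]
    congr 1
    push_cast
    ring
  have hy' := hsub (hYX hy)
  simp only [Set.mem_iUnion] at hy'
  obtain ⟨p, hp, h⟩ := hy'
  refine ⟨_, hJ ?_, shift_int hYs p.1 y hy⟩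
  intro j hj
  have h2 : y (j + p.1) = pt s j := h j hj
  simp only [h2]
  exact (hu j hj).2

lemma infinite_orb : (closure orb).Infinite := by
  refine Set.infinite_of_injective_forall_mem (f := fun m : ℤ => pt (m * √2)) ?_
    (fun m => subset_closure ⟨_, rfl⟩)
  intro m n hmn
  by_contra hne
  have h1 := congrFun hmn (-m)
  have h2 := congrFun hmn (-n)
  simp only [pt] at h1 h2
  have e0 : cf 0 = true := by simp [cf]
  rw [show (m : ℝ) * √2 + (-m : ℤ) * √2 = 0 by push_cast; ring, e0,
    show (n : ℝ) * √2 + (-m : ℤ) * √2 = (n - m) * √2 by push_cast; ring] at h1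
  rw [show (n : ℝ) * √2 + (-n : ℤ) * √2 = 0 by push_cast; ring, e0,
    show (m : ℝ) * √2 + (-n : ℤ) * √2 = - ((n - m) * √2) by push_cast; ring] at h2
  have h1' := of_decide_eq_true h1.symm
  have h2' := of_decide_eq_true h2
  by_cases hz : Int.fract (((n : ℝ) - m) * √2) = 0
  · unfold Int.fract at hz
    have := (indep (-⌊((n : ℝ) - m) * √2⌋) (n - m) (by push_cast; linarith)).2
    omega
  · rw [Int.fract_neg hz] at h2'
    linarith

/-! ### Counting -/

/-- Breakpoints. -/
noncomputable def bp (n : ℕ) : Finset ℝ :=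
  (Finset.range n).image (fun k : ℕ => 1 / 3 - Int.fract (k * √2)) ∪
  ((Finset.range n).image (fun k : ℕ => 1 - Int.fract (k * √2)) ∪
  (Finset.range n).image (fun k : ℕ => 4 / 3 - Int.fract (k * √2)))

lemma bp_card (n : ℕ) : (bp n).card ≤ 3 * n := by
  have h : ∀ f : ℕ → ℝ, ((Finset.range n).image f).card ≤ n := fun f =>
    Finset.card_image_le.trans (by simp)
  unfold bp
  refine (Finset.card_union_le _ _).trans ?_
  have h2 := Finset.card_union_le ((Finset.range n).image (fun k : ℕ => 1 - Int.fract (k * √2)))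
    ((Finset.range n).image (fun k : ℕ => 4 / 3 - Int.fract (k * √2)))
  have := h (fun k : ℕ => 1 / 3 - Int.fract (k * √2))
  have := h (fun k : ℕ => 1 - Int.fract (k * √2))
  have := h (fun k : ℕ => 4 / 3 - Int.fract (k * √2))
  omega

lemma cf_formula (t c : ℝ) (h0 : 0 ≤ t) (h1 : t < 1) :
    cf (t + c) = decide (¬ (1 / 3 - Int.fract c ≤ t) ∨
      (1 - Int.fract c ≤ t ∧ ¬ (4 / 3 - Int.fract c ≤ t))) := by
  have e : cf (t + c) = cf (t + Int.fract c) := by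
    rw [← cf_add_int (t + Int.fract c) ⌊c⌋]
    congr 1
    unfold Int.fract; ring
  rw [e]
  have h2 := Int.fract_nonneg c
  have h3 := Int.fract_lt_one c
  generalize Int.fract c = d at *
  unfold cf
  rw [decide_eq_decide]
  by_cases h : t + d < 1
  · rw [Int.fract_eq_self.2 ⟨by linarith, h⟩]
    constructor
    · intro h'; left; linarith
    · rintro (h' | h')
      · linarith
      · linarith [h'.1]
  · have hf : Int.fract (t + d) = t + d - 1 := by
      rw [Int.fract_eq_iff]
      exact ⟨by linarith, by linarith, 1, by push_cast; ring⟩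
    rw [hf]
    constructor
    · intro h'; right; constructor <;> linarith
    · rintro (h' | h')
      · linarith
      · linarith [h'.2]

lemma filter_eq_of_card (P : Finset ℝ) (s t : ℝ)
    (h : (P.filter (· ≤ s)).card = (P.filter (· ≤ t)).card) :
    ∀ p ∈ P, p ≤ s ↔ p ≤ t := by
  have key : P.filter (· ≤ s) = P.filter (· ≤ t) := by
    rcases le_total s t with hst | hst
    · exact Finset.eq_of_subset_of_card_le
        (Finset.monotone_filter_right P fun p _ hp => le_trans hp hst) h.ge
    · exact (Finset.eq_of_subset_of_card_le
        (Finset.monotone_filter_right P fun p _ hp => le_trans hp hst) h.le).symm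
  intro p hp
  have := Finset.ext_iff.1 key p
  simpa [hp] using this

lemma wd_fract (n : ℕ) (t : ℝ) : wd n (Int.fract t) = wd n t := by
  funext k
  simp only [wd, pt]
  rw [← cf_add_int (Int.fract t + _) ⌊t⌋]
  congr 1
  unfold Int.fract; ring

lemma wd_eq (n : ℕ) (s t : ℝ) (hs : 0 ≤ s) (hs1 : s < 1) (ht : 0 ≤ t) (ht1 : t < 1)
    (h : ((bp n).filter (· ≤ s)).card = ((bp n).filter (· ≤ t)).card) : wd n s = wd n t := by
  have key := filter_eq_of_card _ s t h
  funext k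
  simp only [wd, pt]
  rw [cf_formula _ _ hs hs1, cf_formula _ _ ht ht1, decide_eq_decide]
  have hk : (k : ℕ) ∈ Finset.range n := Finset.mem_range.2 k.2
  have a1 := key (1 / 3 - Int.fract ((k : ℕ) * √2))
    (Finset.mem_union_left _ (Finset.mem_image.2 ⟨k, hk, rfl⟩))
  have a2 := key (1 - Int.fract ((k : ℕ) * √2))
    (Finset.mem_union_right _ (Finset.mem_union_left _ (Finset.mem_image.2 ⟨k, hk, rfl⟩)))
  have a3 := key (4 / 3 - Int.fract ((k : ℕ) * √2))
    (Finset.mem_union_right _ (Finset.mem_union_right _ (Finset.mem_image.2 ⟨k, hk, rfl⟩)))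
  rw [Int.cast_natCast, a1, a2, a3]

lemma lang_card (n : ℕ) : (Lang (closure orb) n).ncard ≤ 3 * n + 1 := by
  rw [lang_eq]
  have hr : ∀ w ∈ Set.range (wd n), ∃ t : ℝ, 0 ≤ t ∧ t < 1 ∧ wd n t = w := by
    rintro _ ⟨t, rfl⟩
    exact ⟨Int.fract t, Int.fract_nonneg t, Int.fract_lt_one t, wd_fract n t⟩
  choose! g hg0 hg1 hg using hr
  have := Set.ncard_le_ncard_of_injOn (s := Set.range (wd n))
    (t := (Finset.range (3 * n + 1) : Set ℕ))
    (fun w => ((bp n).filter (· ≤ g w)).card)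
    (fun w _ => by
      have h1 := Finset.card_filter_le (bp n) (· ≤ g w)
      have h2 := bp_card n
      simp only [Finset.coe_range, Set.mem_Iio]
      omega)
    (fun w hw v hv h => by
      rw [← hg w hw, ← hg v hv]
      exact wd_eq n _ _ (hg0 w hw) (hg1 w hw) (hg0 v hv) (hg1 v hv) h)
    (Finset.finite_toSet _)
  rwa [Set.ncard_coe_finset, Finset.card_range] at this

lemma entropy_orb : Filter.Tendsto
    (fun n : ℕ => Real.log ((Lang (closure orb) n).ncard) / (n : ℝ))
    Filter.atTop (nhds 0) := by
  have hlog : Filter.Tendsto (fun n : ℕ => Real.log (n : ℝ) / (n : ℝ)) Filter.atTop (nhds 0) := by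
    have := Real.isLittleO_log_id_atTop.tendsto_div_nhds_zero
    exact this.comp tendsto_natCast_atTop_atTop
  have hc : Filter.Tendsto (fun n : ℕ => Real.log 4 / (n : ℝ)) Filter.atTop (nhds 0) :=
    tendsto_const_div_atTop_nhds_zero_nat _
  have hs := hc.add hlog
  rw [add_zero] at hs
  refine tendsto_of_tendsto_of_tendsto_of_le_of_le' tendsto_const_nhds hs
    (Filter.Eventually.of_forall fun n => div_nonneg (Real.log_natCast_nonneg _) (by positivity)) ?_
  filter_upwards [Filter.eventually_ge_atTop 1] with n hn
  have hn' : (1 : ℝ) ≤ n := by exact_mod_cast hn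
  rw [← add_div, ← Real.log_mul (by norm_num) (by linarith)]
  gcongr
  · have : (Lang (closure orb) n).Nonempty := by rw [lang_eq]; exact ⟨_, 0, rfl⟩
    exact_mod_cast (Set.ncard_pos (Set.toFinite _)).2 this
  · have h := lang_card n
    have : ((Lang (closure orb) n).ncard : ℝ) ≤ 3 * n + 1 := by exact_mod_cast h
    linarith

theorem exists_minimal_language_connected_zero_entropy :
    ∃ X : Set (ℤ → Bool), IsMinimalSubshift X ∧ X.Infinite ∧ LanguageConnected X ∧
      Filter.Tendsto (fun n : ℕ => Real.log ((Lang X n).ncard) / (n : ℝ))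
        Filter.atTop (nhds 0) := by
  exact ⟨closure orb, minimal_orb, infinite_orb, connected_lang, entropy_orb⟩
end
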